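/- arXiv:2006.16565 — 3 statements merged into one kernel-verified Lean document; each statement's English description precedes it below -/
import Mathlib

section
/- There is an absolute constant C > 0 such that for every finite set P of N points in the hyperbolic plane ℍ² and every t > 0, the number of ordered pairs (p,q) ∈ P × P with d(p,q) = t is at most C · N^(4/3). -/
open scoped UpperHalfPlane MatrixGroups

noncomputable section



structure ArcSys (ι : Type) where
  f : ι → ℝ → ℝ
  lo : ι → ℝ
  hi : ι → ℝ
  cont : ∀ i, Continuous (f i)
  agree : ∀ i j, i ≠ j →
    {x : ℝ | lo i ≤ x ∧ x ≤ hi i ∧ lo j ≤ x ∧ x ≤ hi j ∧ f i x = f j x}.encard ≤ 2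

structure TCell (ι : Type) where
  T : ι
  B : ι
  l : ℝ
  r : ℝ

namespace ArcSys
variable {ι : Type} (A : ArcSys ι)

def Btw (T B g : ι) (x : ℝ) : Prop :=
  A.lo g < x ∧ x < A.hi g ∧ A.f B x < A.f g x ∧ A.f g x < A.f T x

def Good (T B : ι) (x : ℝ) : Prop :=
  A.lo T < x ∧ x < A.hi T ∧ A.lo B < x ∧ x < A.hi B ∧ A.f B x < A.f T x

def Conf (σ : TCell ι) (g : ι) : Prop := ∃ x, σ.l < x ∧ x < σ.r ∧ A.Btw σ.T σ.B g x

def LEv (T B : ι) (l : ℝ) (g : ι) : Prop :=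
  l = A.lo T ∨ l = A.lo B ∨ A.f T l = A.f B l ∨
    ∀ ε > 0, ∃ x, l - ε < x ∧ x < l ∧ A.Btw T B g x

def REv (T B : ι) (r : ℝ) (g : ι) : Prop :=
  r = A.hi T ∨ r = A.hi B ∨ A.f T r = A.f B r ∨
    ∀ ε > 0, ∃ x, r < x ∧ x < r + ε ∧ A.Btw T B g x

def Act (R : Finset ι) (σ : TCell ι) : Prop :=
  σ.l < σ.r ∧ (∀ x, σ.l < x → x < σ.r → A.Good σ.T σ.B x) ∧ σ.T ∈ R ∧ σ.B ∈ R ∧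
    (∀ g ∈ R, ¬ A.Conf σ g) ∧ (∃ g ∈ R, A.LEv σ.T σ.B σ.l g) ∧ ∃ g ∈ R, A.REv σ.T σ.B σ.r g

variable {A}

lemma agree_ne {i j : ι} (h : i ≠ j) {l r : ℝ} (hlr : l < r)
    (hd : ∀ x, l < x → x < r → A.lo i < x ∧ x < A.hi i ∧ A.lo j < x ∧ x < A.hi j) :
    ∃ x, l < x ∧ x < r ∧ A.f i x ≠ A.f j x := by
  by_contra! hc
  have hsub : Set.Ioo l r ⊆
      {x : ℝ | A.lo i ≤ x ∧ x ≤ A.hi i ∧ A.lo j ≤ x ∧ x ≤ A.hi j ∧ A.f i x = A.f j x} := by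
    intro x hx
    obtain ⟨h1, h2, h3, h4⟩ := hd x hx.1 hx.2
    exact ⟨h1.le, h2.le, h3.le, h4.le, hc x hx.1 hx.2⟩
  have h2 := (Set.encard_le_encard hsub).trans (A.agree i j h)
  have : (Set.Ioo l r).Finite := Set.finite_of_encard_le_coe (k := 2) (by simpa using h2)
  exact Set.Ioo_infinite hlr this

lemma act_l_le {R : Finset ι} {σ τ : TCell ι} (hσ : A.Act R σ) (hτ : A.Act R τ)
    (hT : σ.T = τ.T) (hB : σ.B = τ.B) {x : ℝ} (h1 : σ.l < x) (h3 : τ.l < x) (h4 : x < τ.r) :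
    σ.l ≤ τ.l := by
  by_contra! hlt
  obtain ⟨-, hg, -, -, -, ⟨g, hgR, hE⟩, -⟩ := hσ
  obtain ⟨-, hg', -, -, hc', -, -⟩ := hτ
  have hG := hg' σ.l hlt (by linarith)
  rw [← hT, ← hB] at hG
  rcases hE with h | h | h | h
  · exact absurd hG.1 (by rw [← h]; exact lt_irrefl _)
  · exact absurd hG.2.2.1 (by rw [← h]; exact lt_irrefl _)
  · exact absurd hG.2.2.2.2 (by rw [h]; exact lt_irrefl _)
  · obtain ⟨z, hz1, hz2, hz3⟩ := h (σ.l - τ.l) (by linarith)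
    exact hc' g hgR ⟨z, by linarith, by linarith, by rw [← hT, ← hB]; exact hz3⟩

lemma act_r_le {R : Finset ι} {σ τ : TCell ι} (hσ : A.Act R σ) (hτ : A.Act R τ)
    (hT : σ.T = τ.T) (hB : σ.B = τ.B) {x : ℝ} (h1 : x < σ.r) (h3 : τ.l < x) (h4 : x < τ.r) :
    τ.r ≤ σ.r := by
  by_contra! hlt
  obtain ⟨-, hg, -, -, -, -, ⟨g, hgR, hE⟩⟩ := hσ
  obtain ⟨-, hg', -, -, hc', -, -⟩ := hτ
  have hG := hg' σ.r (by linarith) hlt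
  rw [← hT, ← hB] at hG
  rcases hE with h | h | h | h
  · exact absurd hG.2.1 (by rw [← h]; exact lt_irrefl _)
  · exact absurd hG.2.2.2.1 (by rw [← h]; exact lt_irrefl _)
  · exact absurd hG.2.2.2.2 (by rw [h]; exact lt_irrefl _)
  · obtain ⟨z, hz1, hz2, hz3⟩ := h (τ.r - σ.r) (by linarith)
    exact hc' g hgR ⟨z, by linarith, by linarith, by rw [← hT, ← hB]; exact hz3⟩

lemma act_eq {R : Finset ι} {σ τ : TCell ι} (hσ : A.Act R σ) (hτ : A.Act R τ)
    (hT : σ.T = τ.T) (hB : σ.B = τ.B) {x : ℝ} (h1 : σ.l < x) (h2 : x < σ.r)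
    (h3 : τ.l < x) (h4 : x < τ.r) : σ = τ := by
  have a := act_l_le hσ hτ hT hB h1 h3 h4
  have b := act_l_le hτ hσ hT.symm hB.symm h3 h1 h2
  have c := act_r_le hσ hτ hT hB h2 h3 h4
  have d := act_r_le hτ hσ hT.symm hB.symm h4 h1 h2
  cases σ; cases τ
  simp only at *
  subst hT hB
  congr 1 <;> linarith

/-- same top and left end -/
lemma act_eq_T {R : Finset ι} {σ τ : TCell ι} (hσ : A.Act R σ) (hτ : A.Act R τ)
    (hT : σ.T = τ.T) (hl : σ.l = τ.l) : σ = τ := by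
  have hlr : σ.l < min σ.r τ.r := lt_min hσ.1 (hl ▸ hτ.1)
  by_cases hB : σ.B = τ.B
  · obtain ⟨x, hx1, hx2⟩ := exists_between hlr
    have := lt_min_iff.1 hx2
    exact act_eq hσ hτ hT hB hx1 this.1 (hl ▸ hx1) this.2
  · exfalso
    obtain ⟨x, hx1, hx2, hx3⟩ := agree_ne (A := A) hB hlr (by
      intro x hx1 hx2
      have h2 := lt_min_iff.1 hx2
      have a := hσ.2.1 x hx1 h2.1
      have b := hτ.2.1 x (hl ▸ hx1) h2.2
      exact ⟨a.2.2.1, a.2.2.2.1, b.2.2.1, b.2.2.2.1⟩)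
    have h2 := lt_min_iff.1 hx2
    have a := hσ.2.1 x hx1 h2.1
    have b := hτ.2.1 x (hl ▸ hx1) h2.2
    rcases lt_or_gt_of_ne hx3 with h | h
    · exact hσ.2.2.2.2.1 τ.B hτ.2.2.2.1 ⟨x, hx1, h2.1, b.2.2.1, b.2.2.2.1, h, by
        rw [hT]; exact b.2.2.2.2⟩
    · exact hτ.2.2.2.2.1 σ.B hσ.2.2.2.1 ⟨x, hl ▸ hx1, h2.2, a.2.2.1, a.2.2.2.1, h, by
        rw [← hT]; exact a.2.2.2.2⟩

lemma act_eq_B {R : Finset ι} {σ τ : TCell ι} (hσ : A.Act R σ) (hτ : A.Act R τ)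
    (hB : σ.B = τ.B) (hl : σ.l = τ.l) : σ = τ := by
  have hlr : σ.l < min σ.r τ.r := lt_min hσ.1 (hl ▸ hτ.1)
  by_cases hT : σ.T = τ.T
  · exact act_eq_T hσ hτ hT hl
  · exfalso
    obtain ⟨x, hx1, hx2, hx3⟩ := agree_ne (A := A) hT hlr (by
      intro x hx1 hx2
      have h2 := lt_min_iff.1 hx2
      have a := hσ.2.1 x hx1 h2.1
      have b := hτ.2.1 x (hl ▸ hx1) h2.2
      exact ⟨a.1, a.2.1, b.1, b.2.1⟩)
    have h2 := lt_min_iff.1 hx2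
    have a := hσ.2.1 x hx1 h2.1
    have b := hτ.2.1 x (hl ▸ hx1) h2.2
    rcases lt_or_gt_of_ne hx3 with h | h
    · exact hτ.2.2.2.2.1 σ.T hσ.2.2.1 ⟨x, hl ▸ hx1, h2.2, a.1, a.2.1, by
        rw [← hB]; exact a.2.2.2.2, h⟩
    · exact hσ.2.2.2.2.1 τ.T hτ.2.2.1 ⟨x, hx1, h2.1, b.1, b.2.1, by
        rw [hB]; exact b.2.2.2.2, h⟩

open Filter Topology in
lemma act_eq_G {R : Finset ι} {σ τ : TCell ι} (hσ : A.Act R σ) (hτ : A.Act R τ)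
    {y : ℝ} (hl : σ.l = τ.l) (h1 : A.f σ.B σ.l < y) (h2 : y < A.f σ.T σ.l)
    (h3 : A.f τ.B τ.l < y) (h4 : y < A.f τ.T τ.l) : σ = τ := by
  by_cases hT : σ.T = τ.T
  · exact act_eq_T hσ hτ hT hl
  exfalso
  rw [← hl] at h3 h4
  have e1 : ∀ᶠ x in 𝓝 σ.l, A.f σ.B x < y := (A.cont _).continuousAt.eventually_lt_const h1
  have e2 : ∀ᶠ x in 𝓝 σ.l, y < A.f σ.T x := (A.cont _).continuousAt.eventually_const_lt h2
  have e3 : ∀ᶠ x in 𝓝 σ.l, A.f τ.B x < y := (A.cont _).continuousAt.eventually_lt_const h3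
  have e4 : ∀ᶠ x in 𝓝 σ.l, y < A.f τ.T x := (A.cont _).continuousAt.eventually_const_lt h4
  obtain ⟨ε, hε, hball⟩ := Metric.eventually_nhds_iff.1 (e1.and (e2.and (e3.and e4)))
  have hlr : σ.l < min (min σ.r τ.r) (σ.l + ε) := lt_min (lt_min hσ.1 (hl ▸ hτ.1)) (by linarith)
  obtain ⟨x, hx1, hx2, hx3⟩ := agree_ne (A := A) hT hlr (by
      intro x hx1 hx2
      have h2 := lt_min_iff.1 (lt_min_iff.1 hx2).1
      have a := hσ.2.1 x hx1 h2.1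
      have b := hτ.2.1 x (hl ▸ hx1) h2.2
      exact ⟨a.1, a.2.1, b.1, b.2.1⟩)
  have h2 := lt_min_iff.1 (lt_min_iff.1 hx2).1
  have a := hσ.2.1 x hx1 h2.1
  have b := hτ.2.1 x (hl ▸ hx1) h2.2
  obtain ⟨k1, k2, k3, k4⟩ := hball (y := x) (by
    rw [Real.dist_eq, abs_lt]
    have := (lt_min_iff.1 hx2).2
    constructor <;> linarith)
  rcases lt_or_gt_of_ne hx3 with h | h
  · exact hτ.2.2.2.2.1 σ.T hσ.2.2.1 ⟨x, hl ▸ hx1, h2.2, a.1, a.2.1, by linarith, h⟩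
  · exact hσ.2.2.2.2.1 τ.T hτ.2.2.1 ⟨x, hx1, h2.1, b.1, b.2.1, by linarith, h⟩

variable (A) in
/-- vertex abscissae along `h` -/
def Vx (R : Finset ι) (h : ι) (l : ℝ) : Prop :=
  l = A.lo h ∨ ∃ g ∈ R, g ≠ h ∧ A.lo h ≤ l ∧ l ≤ A.hi h ∧ A.lo g ≤ l ∧ l ≤ A.hi g ∧
    A.f h l = A.f g l

open Filter Topology in
lemma act_class {R : Finset ι} {σ : TCell ι} (hσ : A.Act R σ) :
    A.Vx R σ.T σ.l ∨ A.Vx R σ.B σ.l ∨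
      ∃ g ∈ R, σ.l = A.hi g ∧ A.f σ.B σ.l < A.f g σ.l ∧ A.f g σ.l < A.f σ.T σ.l := by
  obtain ⟨hlr, hg, hT, hB, hc, ⟨g, hgR, hE⟩, -⟩ := hσ
  have cl : ∀ (u : ℝ), (∀ x, σ.l < x → x < σ.r → u < x) → u ≤ σ.l := by
    intro u hu
    by_contra! h
    obtain ⟨x, hx1, hx2⟩ := exists_between (lt_min h hlr)
    have := lt_min_iff.1 hx2
    linarith [hu x hx1 this.2, this.1]
  obtain ⟨m, hm1, hm2⟩ := exists_between hlr
  have c1 := cl (A.lo σ.T) (fun x a b => (hg x a b).1)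
  have c2 := cl (A.lo σ.B) (fun x a b => (hg x a b).2.2.1)
  have hm := hg m hm1 hm2
  have c3 : σ.l < A.hi σ.T := by linarith [hm.2.1]
  have c4 : σ.l < A.hi σ.B := by linarith [hm.2.2.2.1]
  have hTB : σ.B ≠ σ.T := by
    intro h
    have := hm.2.2.2.2
    rw [h] at this
    exact lt_irrefl _ this
  rcases hE with h | h | h | h
  · exact Or.inl (Or.inl h)
  · exact Or.inr (Or.inl (Or.inl h))
  · exact Or.inl (Or.inr ⟨σ.B, hB, hTB, c1, c3.le, c2, c4.le, h⟩)
  · have hfr : ∃ᶠ x in 𝓝 σ.l, A.Btw σ.T σ.B g x := by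
      rw [Metric.nhds_basis_ball.frequently_iff]
      intro ε hε
      obtain ⟨x, h1, h2, h3⟩ := h ε hε
      exact ⟨x, by rw [Metric.mem_ball, Real.dist_eq, abs_lt]; constructor <;> linarith, h3⟩
    obtain ⟨x0, hx1, hx2, hx3⟩ := h 1 one_pos
    have g1 : A.lo g < σ.l := by linarith [hx3.1]
    have g2 : σ.l ≤ A.hi g := by
      by_contra! hlt
      obtain ⟨x, hx1, hx2, hx3⟩ := h (σ.l - A.hi g) (by linarith)
      linarith [hx3.2.1]
    have g3 : A.f σ.B σ.l ≤ A.f g σ.l := by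
      by_contra! hlt
      have := (A.cont g).continuousAt.eventually_lt (A.cont σ.B).continuousAt hlt
      obtain ⟨x, hx, hx'⟩ := (hfr.and_eventually this).exists
      linarith [hx.2.2.1]
    have g4 : A.f g σ.l ≤ A.f σ.T σ.l := by
      by_contra! hlt
      have := (A.cont σ.T).continuousAt.eventually_lt (A.cont g).continuousAt hlt
      obtain ⟨x, hx, hx'⟩ := (hfr.and_eventually this).exists
      linarith [hx.2.2.2]
    have n1 : g ≠ σ.T := by
      rintro rfl
      exact lt_irrefl _ hx3.2.2.2
    have n2 : g ≠ σ.B := by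
      rintro rfl
      exact lt_irrefl _ hx3.2.2.1
    rcases g3.eq_or_lt with e3 | e3
    · exact Or.inr (Or.inl (Or.inr ⟨g, hgR, n2, c2, c4.le, g1.le, g2, e3⟩))
    rcases g4.eq_or_lt with e4 | e4
    · exact Or.inl (Or.inr ⟨g, hgR, n1, c1, c3.le, g1.le, g2, e4.symm⟩)
    refine Or.inr (Or.inr ⟨g, hgR, ?_, e3, e4⟩)
    by_contra hne
    have g5 : σ.l < A.hi g := lt_of_le_of_ne g2 hne
    have ev1 := (A.cont σ.B).continuousAt.eventually_lt (A.cont g).continuousAt e3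
    have ev2 := (A.cont g).continuousAt.eventually_lt (A.cont σ.T).continuousAt e4
    have ev3 : ∀ᶠ x in 𝓝 σ.l, x < A.hi g := eventually_lt_nhds g5
    obtain ⟨ε, hε, hball⟩ := Metric.eventually_nhds_iff.1 (ev1.and (ev2.and ev3))
    obtain ⟨x, hx1, hx2⟩ := exists_between (lt_min hlr (by linarith : σ.l < σ.l + ε))
    have hx2 := lt_min_iff.1 hx2
    obtain ⟨k1, k2, k3⟩ := hball (y := x) (by
      rw [Real.dist_eq, abs_lt]
      constructor <;> linarith)
    exact hc g hgR ⟨x, hx1, hx2.1, by linarith, k3, k1, k2⟩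

lemma encard_biUnion_le' {α β : Type} (R : Finset α) (s : α → Set β) (k : ℕ)
    (h : ∀ a ∈ R, (s a).encard ≤ k) : (⋃ a ∈ R, s a).encard ≤ (R.card * k : ℕ) := by
  classical
  induction R using Finset.induction_on with
  | empty => simp
  | insert a R ha ih =>
    rw [Finset.set_biUnion_insert, Finset.card_insert_of_notMem ha]
    refine (Set.encard_union_le _ _).trans ?_
    have h1 := h a (Finset.mem_insert_self _ _)
    have h2 := ih (fun b hb => h b (Finset.mem_insert_of_mem hb))
    calc _ ≤ (k : ℕ∞) + (R.card * k : ℕ) := add_le_add h1 h2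
      _ = _ := by push_cast; ring

lemma Vx_encard (R : Finset ι) (h : ι) : {l | A.Vx R h l}.encard ≤ (1 + R.card * 2 : ℕ) := by
  have : {l | A.Vx R h l} ⊆ {A.lo h} ∪ ⋃ g ∈ R, {l | g ≠ h ∧ A.lo h ≤ l ∧ l ≤ A.hi h ∧
      A.lo g ≤ l ∧ l ≤ A.hi g ∧ A.f h l = A.f g l} := by
    intro l hl
    rcases hl with hl | ⟨g, hg, hh⟩
    · left; exact hl
    · right; simp only [Set.mem_iUnion]; exact ⟨g, hg, hh⟩
  refine (Set.encard_le_encard this).trans ((Set.encard_union_le _ _).trans ?_)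
  push_cast
  refine add_le_add (by simp) ?_
  have := encard_biUnion_le' R (fun g => {l | g ≠ h ∧ A.lo h ≤ l ∧ l ≤ A.hi h ∧
      A.lo g ≤ l ∧ l ≤ A.hi g ∧ A.f h l = A.f g l}) 2 (by
    intro g hg
    by_cases hgh : g = h
    · simp [hgh]
    · refine (Set.encard_le_encard ?_).trans (A.agree h g (Ne.symm hgh))
      intro l hl
      exact hl.2)
  simpa using this

lemma act_encard (R : Finset ι) :
    {σ | A.Act R σ}.encard ≤ (4 * R.card ^ 2 + 3 * R.card : ℕ) := by
  set V : Set (ι × ℝ) := ⋃ h ∈ R, {z | z.1 = h ∧ A.Vx R h z.2} with hV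
  have hVc : V.encard ≤ (R.card * (1 + R.card * 2) : ℕ) := by
    apply encard_biUnion_le'
    intro h hh
    refine le_trans ?_ (Vx_encard (A := A) R h)
    apply Set.encard_le_encard_of_injOn (f := Prod.snd)
    · intro z hz; exact hz.2
    · intro z hz w hw hzw
      exact Prod.ext (hz.1.trans hw.1.symm) hzw
  have hsub : {σ | A.Act R σ} ⊆ {σ | A.Act R σ ∧ A.Vx R σ.T σ.l} ∪ ({σ | A.Act R σ ∧ A.Vx R σ.B σ.l}
      ∪ {σ | A.Act R σ ∧ ∃ g ∈ R, σ.l = A.hi g ∧ A.f σ.B σ.l < A.f g σ.l ∧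
        A.f g σ.l < A.f σ.T σ.l}) := by
    intro σ hσ
    have hσ' : A.Act R σ := hσ
    rcases act_class hσ' with h | h | h
    · exact Or.inl ⟨hσ, h⟩
    · exact Or.inr (Or.inl ⟨hσ, h⟩)
    · exact Or.inr (Or.inr ⟨hσ, h⟩)
  have h1 : {σ | A.Act R σ ∧ A.Vx R σ.T σ.l}.encard ≤ V.encard := by
    apply Set.encard_le_encard_of_injOn (f := fun σ => (σ.T, σ.l))
    · intro σ hσ
      simp only [hV, Set.mem_iUnion]
      exact ⟨σ.T, hσ.1.2.2.1, rfl, hσ.2⟩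
    · intro σ hσ τ hτ h
      simp only [Prod.mk.injEq] at h
      exact act_eq_T hσ.1 hτ.1 h.1 h.2
  have h2 : {σ | A.Act R σ ∧ A.Vx R σ.B σ.l}.encard ≤ V.encard := by
    apply Set.encard_le_encard_of_injOn (f := fun σ => (σ.B, σ.l))
    · intro σ hσ
      simp only [hV, Set.mem_iUnion]
      exact ⟨σ.B, hσ.1.2.2.2.1, rfl, hσ.2⟩
    · intro σ hσ τ hτ h
      simp only [Prod.mk.injEq] at h
      exact act_eq_B hσ.1 hτ.1 h.1 h.2
  have h3 : {σ | A.Act R σ ∧ ∃ g ∈ R, σ.l = A.hi g ∧ A.f σ.B σ.l < A.f g σ.l ∧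
        A.f g σ.l < A.f σ.T σ.l}.encard ≤ (R.card * 1 : ℕ) := by
    have : {σ | A.Act R σ ∧ ∃ g ∈ R, σ.l = A.hi g ∧ A.f σ.B σ.l < A.f g σ.l ∧
        A.f g σ.l < A.f σ.T σ.l} ⊆ ⋃ g ∈ R, {σ | A.Act R σ ∧ σ.l = A.hi g ∧
          A.f σ.B σ.l < A.f g σ.l ∧ A.f g σ.l < A.f σ.T σ.l} := by
      rintro σ ⟨hσ, g, hg, h⟩
      simp only [Set.mem_iUnion]
      exact ⟨g, hg, hσ, h⟩
    refine (Set.encard_le_encard this).trans (encard_biUnion_le' _ _ _ ?_)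
    intro g hg
    rw [Nat.cast_one, Set.encard_le_one_iff]
    rintro σ τ ⟨hσ, a1, a2, a3⟩ ⟨hτ, b1, b2, b3⟩
    have hl : σ.l = τ.l := a1.trans b1.symm
    rw [← hl] at b2 b3
    exact act_eq_G hσ hτ hl a2 a3 (hl ▸ b2) (hl ▸ b3)
  refine (Set.encard_le_encard hsub).trans ((Set.encard_union_le _ _).trans ?_)
  refine (add_le_add (h1.trans hVc) ((Set.encard_union_le _ _).trans
    (add_le_add (h2.trans hVc) h3))).trans ?_
  norm_cast
  apply le_of_eq; ring

/-- definers -/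
lemma act_def [DecidableEq ι] {R : Finset ι} {σ : TCell ι} (hσ : A.Act R σ) :
    ∃ D ⊆ R, D.card ≤ 4 ∧ ∀ S, D ⊆ S → S ⊆ R → A.Act S σ := by
  obtain ⟨hlr, hg, hT, hB, hc, ⟨g, hgR, hE⟩, ⟨g', hgR', hE'⟩⟩ := hσ
  refine ⟨{σ.T, σ.B, g, g'}, ?_, Finset.card_le_four, ?_⟩
  · intro x hx
    simp only [Finset.mem_insert, Finset.mem_singleton] at hx
    rcases hx with rfl | rfl | rfl | rfl <;> assumption
  · intro S hS hSR
    exact ⟨hlr, hg, hS (by simp), hS (by simp), fun g hg => hc g (hSR hg),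
      ⟨g, hS (by simp), hE⟩, ⟨g', hS (by simp), hE'⟩⟩

/-- uniqueness of cell containing a generic point -/
lemma act_pt_unique {R : Finset ι} {σ τ : TCell ι} (hσ : A.Act R σ) (hτ : A.Act R τ) {a y : ℝ}
    (hgen : ∀ g ∈ R, ∀ h ∈ R, g ≠ h → A.lo g < a → a < A.hi g → A.lo h < a → a < A.hi h →
      A.f g a ≠ A.f h a)
    (h1 : σ.l < a) (h2 : a < σ.r) (h3 : A.f σ.B a < y) (h4 : y < A.f σ.T a)
    (k1 : τ.l < a) (k2 : a < τ.r) (k3 : A.f τ.B a < y) (k4 : y < A.f τ.T a) : σ = τ := by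
  have g1 := hσ.2.1 a h1 h2
  have g2 := hτ.2.1 a k1 k2
  apply act_eq hσ hτ _ _ h1 h2 k1 k2
  · by_contra hne
    rcases lt_or_gt_of_ne (hgen _ hσ.2.2.1 _ hτ.2.2.1 hne g1.1 g1.2.1 g2.1 g2.2.1) with h | h
    · exact hτ.2.2.2.2.1 σ.T hσ.2.2.1 ⟨a, k1, k2, g1.1, g1.2.1, by linarith, h⟩
    · exact hσ.2.2.2.2.1 τ.T hτ.2.2.1 ⟨a, h1, h2, g2.1, g2.2.1, by linarith, h⟩
  · by_contra hne
    rcases lt_or_gt_of_ne (hgen _ hσ.2.2.2.1 _ hτ.2.2.2.1 hne g1.2.2.1 g1.2.2.2.1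
      g2.2.2.1 g2.2.2.2.1) with h | h
    · exact hσ.2.2.2.2.1 τ.B hτ.2.2.2.1 ⟨a, h1, h2, g2.2.2.1, g2.2.2.2.1, h, by linarith⟩
    · exact hτ.2.2.2.2.1 σ.B hσ.2.2.2.1 ⟨a, k1, k2, g1.2.2.1, g1.2.2.2.1, h, by linarith⟩

end ArcSys

namespace ArcSys
variable {ι : Type} {A : ArcSys ι}

open Filter Topology in
lemma left_end {R : Finset ι} {T B : ι} (hTR : T ∈ R) {a : ℝ} (h0 : A.Good T B a)
    (hev : ∀ g ∈ R, ∀ᶠ x in 𝓝 a, ¬ A.Btw T B g x) :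
    ∃ l < a, (∀ x, l < x → x ≤ a → A.lo T < x ∧ A.lo B < x ∧ A.f B x < A.f T x ∧
      ∀ g ∈ R, ¬ A.Btw T B g x) ∧ ∃ g ∈ R, A.LEv T B l g := by
  set Bad : Set ℝ := {x | x ≤ a ∧ (x ≤ A.lo T ∨ x ≤ A.lo B ∨ A.f T x ≤ A.f B x ∨
    ∃ g ∈ R, A.Btw T B g x)} with hBad
  have hne : A.lo T ∈ Bad := ⟨h0.1.le, Or.inl le_rfl⟩
  have hbdd : BddAbove Bad := ⟨a, fun x hx => hx.1⟩
  have hup : ∀ x ∈ Bad, x ≤ sSup Bad := fun x hx => le_csSup hbdd hx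
  have hap : ∀ ε > 0, ∃ x ∈ Bad, sSup Bad - ε < x := by
    intro ε hε
    exact exists_lt_of_lt_csSup ⟨_, hne⟩ (by linarith)
  set l := sSup Bad with hl
  have hla : l < a := by
    have e1 : ∀ᶠ x in 𝓝 a, A.lo T < x := eventually_gt_nhds h0.1
    have e2 : ∀ᶠ x in 𝓝 a, A.lo B < x := eventually_gt_nhds h0.2.2.1
    have e3 : ∀ᶠ x in 𝓝 a, A.f B x < A.f T x :=
      (A.cont B).continuousAt.eventually_lt (A.cont T).continuousAt h0.2.2.2.2
    have e4 : ∀ᶠ x in 𝓝 a, ∀ g ∈ R, ¬ A.Btw T B g x :=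
      (Filter.eventually_all_finset R).2 hev
    obtain ⟨ε, hε, hball⟩ := Metric.eventually_nhds_iff.1 (e1.and (e2.and (e3.and e4)))
    have : l ≤ a - ε := by
      apply csSup_le ⟨_, hne⟩
      intro x hx
      by_contra! hlt
      obtain ⟨k1, k2, k3, k4⟩ := hball (y := x) (by
        rw [Real.dist_eq, abs_lt]; constructor <;> linarith [hx.1])
      rcases hx.2 with h | h | h | ⟨g, hg, h⟩
      · linarith
      · linarith
      · linarith
      · exact k4 g hg h
    linarith
  have hgood : ∀ x, l < x → x ≤ a → A.lo T < x ∧ A.lo B < x ∧ A.f B x < A.f T x ∧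
      ∀ g ∈ R, ¬ A.Btw T B g x := by
    intro x hx hxa
    have : x ∉ Bad := fun h => absurd (hup x h) (by linarith)
    simp only [hBad, Set.mem_ofPred_eq, not_and, not_or, not_le, not_exists] at this
    obtain ⟨k1, k2, k3, k4⟩ := this hxa
    exact ⟨k1, k2, k3, k4⟩
  refine ⟨l, hla, hgood, ?_⟩
  have cl : ∀ (u : ℝ), (∀ x, l < x → x ≤ a → u < x) → u ≤ l := by
    intro u hu
    by_contra! h
    obtain ⟨x, hx1, hx2⟩ := exists_between (lt_min h hla)
    have := lt_min_iff.1 hx2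
    linarith [hu x hx1 this.2.le, this.1]
  have c1 := cl (A.lo T) (fun x p q => (hgood x p q).1)
  have c2 := cl (A.lo B) (fun x p q => (hgood x p q).2.1)
  rcases c1.eq_or_lt with c1 | c1
  · exact ⟨T, hTR, Or.inl c1.symm⟩
  rcases c2.eq_or_lt with c2 | c2
  · exact ⟨T, hTR, Or.inr (Or.inl c2.symm)⟩
  have right : ∀ (p : ℝ → Prop), (∀ᶠ x in 𝓝 l, p x) → ∃ x, l < x ∧ x ≤ a ∧ p x := by
    intro p hp
    obtain ⟨ε, hε, hball⟩ := Metric.eventually_nhds_iff.1 hp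
    obtain ⟨x, hx1, hx2⟩ := exists_between (lt_min hla (by linarith : l < l + ε))
    have hx2 := lt_min_iff.1 hx2
    exact ⟨x, hx1, hx2.1.le, hball (by rw [Real.dist_eq, abs_lt]; constructor <;> linarith)⟩
  have c3 : A.f B l ≤ A.f T l := by
    by_contra! hlt
    obtain ⟨x, h1, h2, h3⟩ := right _
      ((A.cont T).continuousAt.eventually_lt (A.cont B).continuousAt hlt)
    linarith [(hgood x h1 h2).2.2.1]
  rcases c3.eq_or_lt with c3 | c3
  · exact ⟨T, hTR, Or.inr (Or.inr (Or.inl c3.symm))⟩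
  by_contra! hno
  have hno2 : ∀ g ∈ R, ∃ ε > 0, ∀ x, l - ε < x → x < l → ¬ A.Btw T B g x := by
    intro g hg
    have := hno g hg
    simp only [LEv, not_or, not_forall, not_exists, not_and] at this
    obtain ⟨-, -, -, ε, hε, h⟩ := this
    exact ⟨ε, hε, h⟩
  have hl0 : ∀ g ∈ R, ¬ A.Btw T B g l := by
    intro g hg ⟨k1, k2, k3, k4⟩
    obtain ⟨x, h1, h2, h3, h4, h5⟩ := right _ (((A.cont B).continuousAt.eventually_lt (A.cont g).continuousAt k3).and
      (((A.cont g).continuousAt.eventually_lt (A.cont T).continuousAt k4).and (eventually_lt_nhds k2)))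
    exact (hgood x h1 h2).2.2.2 g hg ⟨by linarith, h5, h3, h4⟩
  have e1 : ∀ᶠ x in 𝓝 l, A.lo T < x := eventually_gt_nhds c1
  have e2 : ∀ᶠ x in 𝓝 l, A.lo B < x := eventually_gt_nhds c2
  have e3 : ∀ᶠ x in 𝓝 l, A.f B x < A.f T x :=
    (A.cont B).continuousAt.eventually_lt (A.cont T).continuousAt c3
  have e4 : ∀ᶠ x in 𝓝 l, ∀ g ∈ R, x < l → ¬ A.Btw T B g x := by
    refine (Filter.eventually_all_finset R).2 ?_
    intro g hg
    obtain ⟨ε, hε, h⟩ := hno2 g hg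
    filter_upwards [eventually_gt_nhds (by linarith : l - ε < l)] with x hx hxl
    exact h x hx hxl
  obtain ⟨ε, hε, hball⟩ := Metric.eventually_nhds_iff.1 (e1.and (e2.and (e3.and e4)))
  obtain ⟨x, hx, hxl⟩ := hap ε hε
  have hxl' := hup x hx
  obtain ⟨k1, k2, k3, k4⟩ := hball (y := x) (by
    rw [Real.dist_eq, abs_lt]; constructor <;> linarith)
  rcases hx.2 with h | h | h | ⟨g, hg, h⟩
  · linarith
  · linarith
  · linarith
  · rcases hxl'.eq_or_lt with e | e
    · exact hl0 g hg (e ▸ h)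
    · exact k4 g hg e h

variable (A) in
def refl : ArcSys ι where
  f i x := A.f i (-x)
  lo i := - A.hi i
  hi i := - A.lo i
  cont i := (A.cont i).comp continuous_neg
  agree i j h := by
    refine le_trans ?_ (A.agree i j h)
    apply Set.encard_le_encard_of_injOn (f := fun x => -x)
    · rintro x ⟨h1, h2, h3, h4, h5⟩
      exact ⟨by linarith, by linarith, by linarith, by linarith, h5⟩
    · intro x _ y _ h
      exact neg_injective h

lemma refl_btw {T B g : ι} {x : ℝ} : A.refl.Btw T B g x ↔ A.Btw T B g (-x) := by
  simp only [Btw, refl]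
  constructor
  · rintro ⟨h1, h2, h3, h4⟩
    exact ⟨by linarith, by linarith, h3, h4⟩
  · rintro ⟨h1, h2, h3, h4⟩
    exact ⟨by linarith, by linarith, h3, h4⟩

open Filter Topology in
lemma right_end {R : Finset ι} {T B : ι} (hTR : T ∈ R) {a : ℝ} (h0 : A.Good T B a)
    (hev : ∀ g ∈ R, ∀ᶠ x in 𝓝 a, ¬ A.Btw T B g x) :
    ∃ r > a, (∀ x, a ≤ x → x < r → x < A.hi T ∧ x < A.hi B ∧ A.f B x < A.f T x ∧
      ∀ g ∈ R, ¬ A.Btw T B g x) ∧ ∃ g ∈ R, A.REv T B r g := by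
  obtain ⟨l, hl, h1, g, hg, h2⟩ := left_end (A := A.refl) (a := -a) (T := T) (B := B) hTR
    (by
      obtain ⟨k1, k2, k3, k4, k5⟩ := h0
      refine ⟨?_, ?_, ?_, ?_, ?_⟩ <;> simp only [refl, neg_neg] <;> linarith)
    (by
      intro g hg
      have h := hev g hg
      rw [← neg_neg a] at h
      have := (continuous_neg.tendsto (-a)).eventually h
      filter_upwards [this] with x hx
      rw [refl_btw]; exact hx)
  refine ⟨-l, by linarith, ?_, g, hg, ?_⟩
  · intro x hx1 hx2
    obtain ⟨k1, k2, k3, k4⟩ := h1 (-x) (by linarith) (by linarith)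
    simp only [refl, neg_neg] at k1 k2 k3
    refine ⟨by linarith, by linarith, k3, ?_⟩
    intro g hg h
    apply k4 g hg
    rw [refl_btw, neg_neg]; exact h
  · rcases h2 with h | h | h | h
    · left; simp only [refl] at h; linarith
    · right; left; simp only [refl] at h; linarith
    · right; right; left; exact h
    · right; right; right
      intro ε hε
      obtain ⟨x, hx1, hx2, hx3⟩ := h ε hε
      exact ⟨-x, by linarith, by linarith, refl_btw.1 hx3⟩

open Filter Topology in
lemma act_exists {R : Finset ι} {a y : ℝ}
    (hdom : ∀ g ∈ R, a ≠ A.lo g ∧ a ≠ A.hi g)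
    (hgen : ∀ g ∈ R, ∀ h ∈ R, g ≠ h → A.lo g < a → a < A.hi g → A.lo h < a → a < A.hi h →
      A.f g a ≠ A.f h a)
    (hoff : ∀ g ∈ R, A.lo g < a → a < A.hi g → A.f g a ≠ y)
    (htop : ∃ t ∈ R, A.lo t < a ∧ a < A.hi t ∧ y < A.f t a)
    (hbot : ∃ t ∈ R, A.lo t < a ∧ a < A.hi t ∧ A.f t a < y) :
    ∃ σ, A.Act R σ ∧ σ.l < a ∧ a < σ.r ∧ A.f σ.B a < y ∧ y < A.f σ.T a := by
  classical
  obtain ⟨T, hT, hTm⟩ := Finset.exists_min_image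
    (R.filter (fun t => A.lo t < a ∧ a < A.hi t ∧ y < A.f t a)) (fun t => A.f t a) (by
      obtain ⟨t, ht, h⟩ := htop
      exact ⟨t, Finset.mem_filter.2 ⟨ht, h⟩⟩)
  obtain ⟨B, hB, hBm⟩ := Finset.exists_max_image
    (R.filter (fun t => A.lo t < a ∧ a < A.hi t ∧ A.f t a < y)) (fun t => A.f t a) (by
      obtain ⟨t, ht, h⟩ := hbot
      exact ⟨t, Finset.mem_filter.2 ⟨ht, h⟩⟩)
  obtain ⟨hTR, t1, t2, t3⟩ := Finset.mem_filter.1 hT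
  obtain ⟨hBR, b1, b2, b3⟩ := Finset.mem_filter.1 hB
  have h0 : A.Good T B a := ⟨t1, t2, b1, b2, by linarith⟩
  have hev : ∀ g ∈ R, ∀ᶠ x in 𝓝 a, ¬ A.Btw T B g x := by
    intro g hg
    by_cases hgT : g = T
    · subst hgT
      exact Eventually.of_forall fun x hx => lt_irrefl _ hx.2.2.2
    by_cases hgB : g = B
    · subst hgB
      exact Eventually.of_forall fun x hx => lt_irrefl _ hx.2.2.1
    by_cases hlo : A.lo g < a
    swap
    · have : a < A.lo g := lt_of_le_of_ne (not_lt.1 hlo) (hdom g hg).1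
      filter_upwards [eventually_lt_nhds this] with x hx h
      linarith [h.1]
    by_cases hhi : a < A.hi g
    swap
    · have : A.hi g < a := lt_of_le_of_ne (not_lt.1 hhi) (hdom g hg).2.symm
      filter_upwards [eventually_gt_nhds this] with x hx h
      linarith [h.2.1]
    rcases lt_or_gt_of_ne (hoff g hg hlo hhi) with h | h
    · have h1 := hBm g (Finset.mem_filter.2 ⟨hg, hlo, hhi, h⟩)
      have h2 : A.f g a < A.f B a := lt_of_le_of_ne h1 (hgen g hg B hBR hgB hlo hhi b1 b2)
      filter_upwards [(A.cont g).continuousAt.eventually_lt (A.cont B).continuousAt h2] with x hx h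
      linarith [h.2.2.1]
    · have h1 := hTm g (Finset.mem_filter.2 ⟨hg, hlo, hhi, h⟩)
      have h2 : A.f T a < A.f g a := lt_of_le_of_ne h1 (hgen g hg T hTR hgT hlo hhi t1 t2).symm
      filter_upwards [(A.cont T).continuousAt.eventually_lt (A.cont g).continuousAt h2] with x hx h
      linarith [h.2.2.2]
  obtain ⟨l, hl, hl1, hl2⟩ := left_end hTR h0 hev
  obtain ⟨r, hr, hr1, hr2⟩ := right_end hTR h0 hev
  refine ⟨⟨T, B, l, r⟩, ⟨by simp only; linarith, ?_, hTR, hBR, ?_, hl2, hr2⟩, hl, hr, b3, t3⟩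
  · intro x hx1 hx2
    simp only at hx1 hx2
    rcases le_total x a with h | h
    · obtain ⟨k1, k2, k3, k4⟩ := hl1 x hx1 h
      exact ⟨k1, by linarith, k2, by linarith, k3⟩
    · obtain ⟨k1, k2, k3, k4⟩ := hr1 x h hx2
      exact ⟨by linarith, k1, by linarith, k2, k3⟩
  · rintro g hg ⟨x, hx1, hx2, hx3⟩
    simp only at hx1 hx2 hx3
    rcases le_total x a with h | h
    · exact (hl1 x hx1 h).2.2.2 g hg hx3
    · exact (hr1 x h hx2).2.2.2 g hg hx3

end ArcSys

namespace CSh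
open Finset
open scoped Classical

lemma cs1 {α Ω : Type} (U : Finset Ω) (act : Finset α → Ω → Prop)
    (K : Ω → Finset α) (c : Ω → Prop)
    (hK : ∀ S ω, act S ω → Disjoint S (K ω))
    (hdef : ∀ S ω, act S ω → ∃ D ⊆ S, D.card ≤ 4 ∧ ∀ S', D ⊆ S' → S' ⊆ S → act S' ω)
    (R : Finset α) (M : ℕ) (hM : ∀ S ⊆ R, (U.filter (fun ω => act S ω ∧ c ω)).card ≤ M) :
    ((R ×ˢ U).filter (fun z => z.1 ∈ K z.2 ∧ act (R.erase z.1) z.2 ∧ c z.2)).card ≤ 32 * M := by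
  set F := (R ×ˢ U).filter (fun z => z.1 ∈ K z.2 ∧ act (R.erase z.1) z.2 ∧ c z.2) with hF
  have h1 : ∀ z ∈ F, 2 ^ R.card ≤ 32 * (R.powerset.filter (fun S => act S z.2)).card := by
    intro z hz
    simp only [hF, mem_filter, mem_product] at hz
    obtain ⟨⟨hzR, hzU⟩, hzK, hza, hzc⟩ := hz
    obtain ⟨D, hD, hD4, hDa⟩ := hdef _ _ hza
    have hsub : Finset.Icc D (R.erase z.1) ⊆ R.powerset.filter (fun S => act S z.2) := by
      intro S hS
      rw [Finset.mem_Icc] at hS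
      rw [mem_filter, mem_powerset]
      exact ⟨hS.2.trans (erase_subset _ _), hDa S hS.1 hS.2⟩
    have h2 := card_le_card hsub
    rw [Finset.card_Icc_finset hD] at h2
    have h3 : (R.erase z.1).card + 1 = R.card := card_erase_add_one hzR
    have h4 := card_le_card hD
    calc 2 ^ R.card ≤ 2 ^ (5 + ((R.erase z.1).card - D.card)) :=
          Nat.pow_le_pow_right (by norm_num) (by omega)
      _ = 32 * 2 ^ ((R.erase z.1).card - D.card) := by rw [pow_add]; norm_num
      _ ≤ _ := by omega
  have h2 : ∑ z ∈ F, (R.powerset.filter (fun S => act S z.2)).card ≤ 2 ^ R.card * M := by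
    have : ∑ z ∈ F, (R.powerset.filter (fun S => act S z.2)).card
        = ∑ S ∈ R.powerset, (F.filter (fun z => act S z.2)).card := by
      simp only [card_filter]
      exact sum_comm
    rw [this, ← card_powerset, ← smul_eq_mul]
    apply sum_le_card_nsmul
    intro S hS
    rw [mem_powerset] at hS
    refine le_trans ?_ (hM S hS)
    apply card_le_card_of_injOn (fun z => z.2)
    · intro z hz
      simp only [hF, coe_filter, mem_filter, mem_product, Set.mem_ofPred_eq] at hz
      simp only [coe_filter, Set.mem_ofPred_eq]
      exact ⟨hz.1.1.2, hz.2, hz.1.2.2.2⟩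
    · intro z hz w hw hzw
      simp only [hF, coe_filter, mem_filter, mem_product, Set.mem_ofPred_eq] at hz hw
      refine Prod.ext ?_ hzw
      by_contra hne
      have hd := hK _ _ hz.1.2.2.1
      have hm : w.1 ∈ R.erase z.1 := mem_erase.2 ⟨fun h => hne h.symm, hw.1.1.1⟩
      have hzw' : z.2 = w.2 := hzw
      exact (Finset.disjoint_left.1 hd hm) (hzw' ▸ hw.1.2.1)
  have h3 : F.card * 2 ^ R.card ≤ 32 * (2 ^ R.card * M) := by
    calc F.card * 2 ^ R.card = ∑ z ∈ F, 2 ^ R.card := by simp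
      _ ≤ ∑ z ∈ F, 32 * (R.powerset.filter (fun S => act S z.2)).card := sum_le_sum h1
      _ = 32 * ∑ z ∈ F, (R.powerset.filter (fun S => act S z.2)).card := by rw [mul_sum]
      _ ≤ _ := Nat.mul_le_mul_left _ h2
  have h4 : F.card * 2 ^ R.card ≤ (32 * M) * 2 ^ R.card := by
    calc _ ≤ _ := h3
      _ = _ := by ring
  exact Nat.le_of_mul_le_mul_right h4 (by positivity)

lemma cs2 {α Ω : Type} (G : Finset α) (U : Finset Ω) (act : Finset α → Ω → Prop)
    (K : Ω → Finset α) (c : Ω → Prop) (hKG : ∀ ω, K ω ⊆ G)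
    (hK : ∀ S ω, act S ω → Disjoint S (K ω))
    (hdef : ∀ S ω, act S ω → ∃ D ⊆ S, D.card ≤ 4 ∧ ∀ S', D ⊆ S' → S' ⊆ S → act S' ω)
    (r M : ℕ) (hM : ∀ S ⊆ G, S.card ≤ r + 1 → (U.filter (fun ω => act S ω ∧ c ω)).card ≤ M) :
    ∑ R ∈ G.powersetCard r, ∑ ω ∈ U.filter (fun ω => act R ω ∧ c ω), (K ω).card
      ≤ (G.card.choose (r + 1)) * (32 * M) := by
  have h1 : ∑ R' ∈ G.powersetCard (r+1),
      ((R' ×ˢ U).filter (fun z => z.1 ∈ K z.2 ∧ act (R'.erase z.1) z.2 ∧ c z.2)).card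
      ≤ (G.card.choose (r + 1)) * (32 * M) := by
    rw [← card_powersetCard, ← smul_eq_mul]
    apply sum_le_card_nsmul
    intro R' hR'
    rw [mem_powersetCard] at hR'
    apply cs1 U act K c hK hdef
    intro S hS
    exact hM S (hS.trans hR'.1) ((card_le_card hS).trans hR'.2.le)
  refine le_trans ?_ h1
  have e1 : ∑ R ∈ G.powersetCard r, ∑ ω ∈ U.filter (fun ω => act R ω ∧ c ω), (K ω).card
      = ((G.powersetCard r).sigma (fun R => (U.filter (fun ω => act R ω ∧ c ω)).sigma
          (fun ω => K ω))).card := by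
    rw [card_sigma]
    simp_rw [card_sigma]
  have e2 : ∑ R' ∈ G.powersetCard (r+1),
      ((R' ×ˢ U).filter (fun z => z.1 ∈ K z.2 ∧ act (R'.erase z.1) z.2 ∧ c z.2)).card
      = ((G.powersetCard (r+1)).sigma (fun R' => (R' ×ˢ U).filter
        (fun z => z.1 ∈ K z.2 ∧ act (R'.erase z.1) z.2 ∧ c z.2))).card := by
    rw [card_sigma]
  rw [e1, e2]
  apply card_le_card_of_injOn
    (fun z => (⟨insert z.2.2 z.1, (z.2.2, z.2.1)⟩ : Sigma fun _ : Finset α => α × Ω))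
  · rintro ⟨R, ω, g⟩ hz
    simp only [mem_coe, mem_sigma, mem_filter, mem_powersetCard] at hz
    obtain ⟨⟨hR, hRr⟩, ⟨hU, ha, hc⟩, hg⟩ := hz
    have hgR : g ∉ R := fun h => (Finset.disjoint_left.1 (hK _ _ ha) h) hg
    simp only [mem_coe, mem_sigma, mem_filter, mem_powersetCard, mem_product]
    refine ⟨⟨insert_subset (hKG _ hg) hR, by rw [card_insert_of_notMem hgR, hRr]⟩,
      ⟨mem_insert_self _ _, hU⟩, hg, ?_, hc⟩
    rw [erase_insert hgR]; exact ha
  · rintro ⟨R, ω, g⟩ hz ⟨R', ω', g'⟩ hz' h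
    simp only [mem_coe, mem_sigma, mem_filter, mem_powersetCard] at hz hz'
    have hgR : g ∉ R := fun h => (Finset.disjoint_left.1 (hK _ _ hz.2.1.2.1) h) hz.2.2
    have hgR' : g' ∉ R' := fun h => (Finset.disjoint_left.1 (hK _ _ hz'.2.1.2.1) h) hz'.2.2
    simp only [Sigma.mk.injEq, heq_eq_eq, Prod.mk.injEq] at h
    obtain ⟨h1, rfl, rfl⟩ := h
    have : R = R' := by
      rw [← erase_insert hgR, h1, erase_insert hgR']
    subst this
    rfl

/-- weak incidence bound -/
lemma weak {β α : Type} (inc : β → α → Prop) (Q : Finset β) (H : Finset α)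
    (hco : ∀ q ∈ Q, ∀ q' ∈ Q, q ≠ q' → (H.filter (fun g => inc q g ∧ inc q' g)).card ≤ 16)
    (I : ℕ) (hI : I = ∑ q ∈ Q, (H.filter (fun g => inc q g)).card) :
    I ^ 2 ≤ H.card * (I + 16 * Q.card ^ 2) := by
  have e1 : I = ∑ g ∈ H, (Q.filter (fun q => inc q g)).card := by
    rw [hI]
    simp only [card_filter]
    exact sum_comm
  have e2 : I ^ 2 ≤ H.card * ∑ g ∈ H, (Q.filter (fun q => inc q g)).card ^ 2 := by
    rw [e1]
    exact sq_sum_le_card_mul_sum_sq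
  refine e2.trans (Nat.mul_le_mul_left _ ?_)
  have e3 : ∑ g ∈ H, (Q.filter (fun q => inc q g)).card ^ 2
      = ∑ q ∈ Q, ∑ q' ∈ Q, (H.filter (fun g => inc q g ∧ inc q' g)).card := by
    have : ∀ g ∈ H, (Q.filter (fun q => inc q g)).card ^ 2
        = ∑ q ∈ Q, ∑ q' ∈ Q, if inc q g ∧ inc q' g then 1 else 0 := by
      intro g _
      rw [card_filter, sq, sum_mul_sum]
      refine sum_congr rfl fun q _ => sum_congr rfl fun q' _ => ?_
      by_cases h1 : inc q g <;> by_cases h2 : inc q' g <;> simp [h1, h2]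
    rw [sum_congr rfl this, sum_comm]
    refine sum_congr rfl fun q _ => ?_
    rw [sum_comm]
    refine sum_congr rfl fun q' _ => ?_
    rw [card_filter]
  rw [e3, hI, sq, ← mul_assoc, mul_comm 16, mul_assoc]
  rw [← smul_eq_mul (a := Q.card), ← sum_const, ← sum_add_distrib]
  refine sum_le_sum fun q hq => ?_
  rw [← add_sum_erase _ _ hq]
  refine add_le_add ?_ ?_
  · simp
  · calc _ ≤ ∑ q' ∈ Q.erase q, 16 := by
          refine sum_le_sum fun q' hq' => ?_
          rw [mem_erase] at hq'
          exact hco q hq q' hq'.2 (fun h => hq'.1 h.symm)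
      _ ≤ 16 * Q.card := by
          rw [sum_const, smul_eq_mul, mul_comm]
          exact Nat.mul_le_mul_left _ (card_le_card (erase_subset _ _))

lemma weak_lin {I h m r : ℝ} (hI : 0 ≤ I) (hh : 0 ≤ h) (hm : 0 ≤ m) (hr : 0 < r)
    (hw : I ^ 2 ≤ h * (I + 16 * m ^ 2)) : I ≤ 2 * h + 3 * m * (h / r + r) := by
  by_contra! hlt
  have hz : 0 ≤ 3 * m * (h / r + r) := by positivity
  have h1 : 2 * h < I := by linarith
  have h2 : I ^ 2 ≤ 32 * h * m ^ 2 := by nlinarith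
  have h3 : 4 * h ≤ (h / r + r) ^ 2 := by
    have : h = h / r * r := by field_simp
    nlinarith [sq_nonneg (h / r - r)]
  have h4 : (3 * m * (h / r + r)) ^ 2 < I ^ 2 := by
    apply pow_lt_pow_left₀ _ hz (by norm_num)
    linarith
  have h5 : 36 * h * m ^ 2 ≤ (3 * m * (h / r + r)) ^ 2 := by
    have : (3 * m * (h / r + r)) ^ 2 = 9 * m ^ 2 * (h / r + r) ^ 2 := by ring
    rw [this]
    nlinarith [sq_nonneg m, mul_le_mul_of_nonneg_left h3 (sq_nonneg m)]
  nlinarith [mul_nonneg hh (sq_nonneg m)]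

/-- at least half of the `r`-subsets avoid a small set -/
lemma half_avoid {α : Type} (G X : Finset α) (hX : X ⊆ G) (r : ℕ) (hr : 1 ≤ r)
    (hG : 1 ≤ G.card) (hd : 2 * r * X.card ≤ G.card) :
    G.card.choose r ≤ 2 * ((G.powersetCard r).filter (fun R => Disjoint R X)).card := by
  have h1 : ∀ g ∈ X, ((G.powersetCard r).filter (fun R => g ∈ R)).card
      ≤ (G.card - 1).choose (r - 1) := by
    intro g hg
    rw [← card_erase_of_mem (hX hg), ← card_powersetCard]
    apply card_le_card_of_injOn (fun R => R.erase g)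
    · intro R hR
      simp only [coe_filter, mem_powersetCard, Set.mem_ofPred_eq] at hR
      simp only [mem_coe, mem_powersetCard]
      exact ⟨erase_subset_erase _ hR.1.1, by rw [card_erase_of_mem hR.2, hR.1.2]⟩
    · intro R hR R' hR' h
      simp only [coe_filter, mem_powersetCard, Set.mem_ofPred_eq] at hR hR'
      simp only at h
      rw [← insert_erase hR.2, h, insert_erase hR'.2]
  have h2 : ((G.powersetCard r).filter (fun R => ¬ Disjoint R X)).card
      ≤ X.card * (G.card - 1).choose (r - 1) := by
    rw [← smul_eq_mul]
    have : (G.powersetCard r).filter (fun R => ¬ Disjoint R X) ⊆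
        X.biUnion (fun g => (G.powersetCard r).filter (fun R => g ∈ R)) := by
      intro R hR
      rw [mem_filter] at hR
      obtain ⟨g, hg1, hg2⟩ := Finset.not_disjoint_iff.1 hR.2
      rw [mem_biUnion]
      exact ⟨g, hg2, mem_filter.2 ⟨hR.1, hg1⟩⟩
    refine (card_le_card this).trans (card_biUnion_le.trans ?_)
    exact sum_le_card_nsmul _ _ _ h1
  have h3 := card_filter_add_card_filter_not (s := G.powersetCard r) (fun R => Disjoint R X)
  rw [card_powersetCard] at h3
  have h4 : G.card * (G.card - 1).choose (r - 1) = G.card.choose r * r := by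
    have := Nat.add_one_mul_choose_eq (G.card - 1) (r - 1)
    rw [Nat.sub_add_cancel hG, Nat.sub_add_cancel hr] at this
    exact this
  have h5 : 2 * (X.card * (G.card - 1).choose (r - 1)) ≤ G.card.choose r := by
    have : r * (2 * (X.card * (G.card - 1).choose (r - 1))) ≤ r * G.card.choose r := by
      calc _ = 2 * r * X.card * (G.card - 1).choose (r - 1) := by ring
        _ ≤ G.card * (G.card - 1).choose (r - 1) := Nat.mul_le_mul_right _ hd
        _ = _ := by rw [h4, mul_comm]
    exact Nat.le_of_mul_le_mul_left this hr
  omega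

end CSh

namespace CSh
open Finset
open scoped Classical

set_option maxHeartbeats 1000000 in
lemma low_bound {α Ω β : Type} (G : Finset α) (U : Finset Ω) (act : Finset α → Ω → Prop)
    (K : Ω → Finset α) (hKG : ∀ ω, K ω ⊆ G)
    (hK : ∀ S ω, act S ω → Disjoint S (K ω))
    (hdef : ∀ S ω, act S ω → ∃ D ⊆ S, D.card ≤ 4 ∧ ∀ S', D ⊆ S' → S' ⊆ S → act S' ω)
    (r M : ℕ) (hM : ∀ S ⊆ G, S.card ≤ r + 1 → (U.filter (fun ω => act S ω)).card ≤ M)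
    (P : Finset β) (inc : β → α → Prop) (loc : β → Ω → Prop)
    (hloc1 : ∀ S ⊆ G, ∀ q ∈ P, (U.filter (fun ω => act S ω ∧ loc q ω)).card ≤ 1)
    (hloc2 : ∀ S ⊆ G, ∀ q ∈ P, (∀ g ∈ S, ¬ inc q g) → ∃ ω ∈ U, act S ω ∧ loc q ω ∧
      ∀ g ∈ G, inc q g → g ∈ K ω)
    (hco : ∀ q ∈ P, ∀ q' ∈ P, q ≠ q' → (G.filter (fun g => inc q g ∧ inc q' g)).card ≤ 16)
    (hr : 1 ≤ r) (hrG : r ≤ G.card)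
    (hdeg : ∀ q ∈ P, 2 * r * (G.filter (fun g => inc q g)).card ≤ G.card) :
    ((∑ q ∈ P, (G.filter (fun g => inc q g)).card : ℕ) : ℝ) ≤
      2 * (2 * (32 * M * G.card / (r + 1)) + 3 * P.card * (32 * G.card / (r + 1)) / r
        + 3 * P.card * r) := by
  have hr0 : (0 : ℝ) < r := by exact_mod_cast hr
  set deg : β → ℕ := fun q => (G.filter (fun g => inc q g)).card with hdeg'
  set PR : Finset α → Finset β := fun R => P.filter (fun q => Disjoint R (G.filter (fun g => inc q g)))
    with hPR
  -- step 1
  have s1 : G.card.choose r * ∑ q ∈ P, deg q ≤ 2 * ∑ R ∈ G.powersetCard r, ∑ q ∈ PR R, deg q := by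
    have : ∑ R ∈ G.powersetCard r, ∑ q ∈ PR R, deg q
        = ∑ q ∈ P, ((G.powersetCard r).filter
          (fun R => Disjoint R (G.filter (fun g => inc q g)))).card * deg q := by
      simp only [hPR, sum_filter]
      rw [sum_comm]
      refine sum_congr rfl fun q _ => ?_
      rw [card_filter, sum_mul]
      refine sum_congr rfl fun R _ => ?_
      split_ifs <;> simp
    rw [this, mul_sum, mul_sum]
    refine sum_le_sum fun q hq => ?_
    rw [← mul_assoc]
    refine Nat.mul_le_mul_right _ ?_
    exact half_avoid G _ (filter_subset _ _) r hr (hr.trans hrG) (hdeg q hq)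
  -- step 2, 3
  set m : Finset α → Ω → ℕ := fun R ω => ((PR R).filter (fun q => loc q ω)).card with hm
  have s2 : ∀ R ∈ G.powersetCard r, ((∑ q ∈ PR R, deg q : ℕ) : ℝ) ≤
      ∑ ω ∈ U.filter (fun ω => act R ω), (2 * ((K ω).card : ℝ) + 3 * m R ω * ((K ω).card / r + r)) := by
    intro R hR
    rw [mem_powersetCard] at hR
    have a1 : ∑ q ∈ PR R, deg q ≤ ∑ ω ∈ U.filter (fun ω => act R ω),
        ∑ q ∈ (PR R).filter (fun q => loc q ω), ((K ω).filter (fun g => inc q g)).card := by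
      have : ∑ ω ∈ U.filter (fun ω => act R ω),
        ∑ q ∈ (PR R).filter (fun q => loc q ω), ((K ω).filter (fun g => inc q g)).card
        = ∑ q ∈ PR R, ∑ ω ∈ U.filter (fun ω => act R ω),
          if loc q ω then ((K ω).filter (fun g => inc q g)).card else 0 := by
        rw [sum_comm]
        refine sum_congr rfl fun ω _ => ?_
        rw [sum_filter]
      rw [this]
      refine sum_le_sum fun q hq => ?_
      rw [hPR, mem_filter] at hq
      obtain ⟨ω, hωU, hωa, hωl, hωK⟩ := hloc2 R hR.1 q hq.1 (by
        intro g hg hi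
        exact (Finset.disjoint_left.1 hq.2 hg) (mem_filter.2 ⟨hR.1 hg, hi⟩))
      have hmem : ω ∈ U.filter (fun ω => act R ω) := mem_filter.2 ⟨hωU, hωa⟩
      refine le_trans ?_ (single_le_sum (f := fun ω => if loc q ω then
        ((K ω).filter (fun g => inc q g)).card else 0) (fun _ _ => Nat.zero_le _) hmem)
      simp only [hωl, if_true]
      apply card_le_card
      intro g hg
      rw [mem_filter] at hg ⊢
      exact ⟨hωK g hg.1 hg.2, hg.2⟩
    refine (Nat.cast_le.2 a1).trans ?_
    push_cast
    refine sum_le_sum fun ω _ => ?_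
    have hw := weak inc ((PR R).filter (fun q => loc q ω)) (K ω) (by
      intro q hq q' hq' hne
      rw [mem_filter, hPR, mem_filter] at hq hq'
      exact (card_le_card (filter_subset_filter _ (hKG ω))).trans
        (hco q hq.1.1 q' hq'.1.1 hne)) _ rfl
    generalize hJ : ∑ q ∈ (PR R).filter (fun q => loc q ω), ((K ω).filter (fun g => inc q g)).card = J at hw
    rw [← Nat.cast_sum, hJ]
    have hw' : (J : ℝ) ^ 2 ≤ ((K ω).card : ℝ) * (J + 16 * (m R ω : ℝ) ^ 2) := by
      simp only [hm]
      exact_mod_cast hw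
    exact weak_lin (Nat.cast_nonneg _) (Nat.cast_nonneg _) (Nat.cast_nonneg _) hr0 hw'
  -- step 4
  have s4 : ∀ R ∈ G.powersetCard r, ∑ ω ∈ U.filter (fun ω => act R ω), m R ω * (K ω).card
      ≤ ∑ q ∈ P, ∑ ω ∈ U.filter (fun ω => act R ω ∧ loc q ω), (K ω).card := by
    intro R hR
    calc ∑ ω ∈ U.filter (fun ω => act R ω), m R ω * (K ω).card
        ≤ ∑ ω ∈ U.filter (fun ω => act R ω), ∑ q ∈ P, if loc q ω then (K ω).card else 0 := by
          refine sum_le_sum fun ω _ => ?_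
          rw [← sum_filter, sum_const, smul_eq_mul]
          refine Nat.mul_le_mul_right _ (card_le_card ?_)
          exact filter_subset_filter _ (filter_subset _ _)
      _ = _ := by
          rw [sum_comm]
          refine sum_congr rfl fun q _ => ?_
          rw [← sum_filter, filter_filter]
  have s5 : ∀ R ∈ G.powersetCard r, ∑ ω ∈ U.filter (fun ω => act R ω), m R ω ≤ P.card := by
    intro R hR
    rw [mem_powersetCard] at hR
    calc ∑ ω ∈ U.filter (fun ω => act R ω), m R ω
        ≤ ∑ ω ∈ U.filter (fun ω => act R ω), ∑ q ∈ P, if loc q ω then 1 else 0 := by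
          refine sum_le_sum fun ω _ => ?_
          rw [← card_filter]
          refine card_le_card ?_
          exact filter_subset_filter _ (filter_subset _ _)
      _ = ∑ q ∈ P, (U.filter (fun ω => act R ω ∧ loc q ω)).card := by
          rw [sum_comm]
          refine sum_congr rfl fun q _ => ?_
          rw [← card_filter, filter_filter]
      _ ≤ ∑ q ∈ P, 1 := sum_le_sum fun q hq => hloc1 R hR.1 q hq
      _ = P.card := by simp
  -- step 5
  have t1 : ∑ R ∈ G.powersetCard r, ∑ ω ∈ U.filter (fun ω => act R ω), (K ω).card
      ≤ (G.card.choose (r + 1)) * (32 * M) := by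
    have := cs2 G U act K (fun _ => True) hKG hK hdef r M (by simpa using hM)
    simpa using this
  have t2 : ∑ R ∈ G.powersetCard r, ∑ q ∈ P, ∑ ω ∈ U.filter (fun ω => act R ω ∧ loc q ω), (K ω).card
      ≤ P.card * ((G.card.choose (r + 1)) * 32) := by
    rw [sum_comm, ← smul_eq_mul]
    apply sum_le_card_nsmul
    intro q hq
    have := cs2 G U act K (fun ω => loc q ω) hKG hK hdef r 1 (fun S hS _ => hloc1 S hS q hq)
    simpa using this
  have hch : ((G.card.choose (r+1) : ℕ) : ℝ) ≤ (G.card.choose r : ℝ) * (G.card / (r + 1)) := by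
    have h := Nat.choose_succ_right_eq G.card r
    have h' : ((G.card.choose (r+1) : ℕ) : ℝ) * (r + 1) ≤ (G.card.choose r : ℝ) * G.card := by
      have : G.card.choose (r+1) * (r + 1) ≤ G.card.choose r * G.card := by
        rw [h]; exact Nat.mul_le_mul_left _ (Nat.sub_le _ _)
      exact_mod_cast this
    rw [← mul_div_assoc, le_div_iff₀ (by positivity)]
    exact h'
  have hpos : (0 : ℝ) < (G.card.choose r : ℝ) := by exact_mod_cast Nat.choose_pos hrG
  have tot : ((∑ R ∈ G.powersetCard r, ∑ q ∈ PR R, deg q : ℕ) : ℝ) ≤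
      (G.card.choose r : ℝ) * (2 * (32 * M * G.card / (r + 1)) +
        3 * P.card * (32 * G.card / (r + 1)) / r + 3 * P.card * r) := by
    have b1 : ((∑ R ∈ G.powersetCard r, ∑ q ∈ PR R, deg q : ℕ) : ℝ) ≤
        2 * ((∑ R ∈ G.powersetCard r, ∑ ω ∈ U.filter (fun ω => act R ω), (K ω).card : ℕ) : ℝ)
        + 3 / r * ((∑ R ∈ G.powersetCard r, ∑ q ∈ P,
            ∑ ω ∈ U.filter (fun ω => act R ω ∧ loc q ω), (K ω).card : ℕ) : ℝ)
        + (G.card.choose r : ℝ) * (3 * P.card * r) := by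
      have hcc : (G.card.choose r : ℝ) * (3 * P.card * r)
          = ∑ R ∈ G.powersetCard r, (3 * P.card * r : ℝ) := by
        rw [sum_const, card_powersetCard, nsmul_eq_mul]
      rw [hcc, Nat.cast_sum, Nat.cast_sum, Nat.cast_sum, mul_sum, mul_sum, ← sum_add_distrib,
        ← sum_add_distrib]
      refine sum_le_sum fun R hR => ?_
      refine (s2 R hR).trans ?_
      have c1 : (((∑ ω ∈ U.filter (fun ω => act R ω), m R ω * (K ω).card : ℕ)) : ℝ) ≤ _ :=
        Nat.cast_le.2 (s4 R hR)
      have c2 : (((∑ ω ∈ U.filter (fun ω => act R ω), m R ω : ℕ)) : ℝ) ≤ _ :=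
        Nat.cast_le.2 (s5 R hR)
      have c3 : ∑ ω ∈ U.filter (fun ω => act R ω),
          (2 * ((K ω).card : ℝ) + 3 * m R ω * ((K ω).card / r + r))
          = 2 * ((∑ ω ∈ U.filter (fun ω => act R ω), (K ω).card : ℕ) : ℝ)
          + 3 / r * (((∑ ω ∈ U.filter (fun ω => act R ω), m R ω * (K ω).card : ℕ)) : ℝ)
          + 3 * r * (((∑ ω ∈ U.filter (fun ω => act R ω), m R ω : ℕ)) : ℝ) := by
        push_cast
        rw [mul_sum, mul_sum, mul_sum, ← sum_add_distrib, ← sum_add_distrib]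
        refine sum_congr rfl fun ω _ => ?_
        field_simp
        ring
      rw [c3]
      have d1 := mul_le_mul_of_nonneg_left c1 (by positivity : (0:ℝ) ≤ 3 / r)
      have d2 := mul_le_mul_of_nonneg_left c2 (by positivity : (0:ℝ) ≤ 3 * r)
      linarith
    have t1' : ((∑ R ∈ G.powersetCard r, ∑ ω ∈ U.filter (fun ω => act R ω), (K ω).card : ℕ) : ℝ)
        ≤ (G.card.choose r : ℝ) * (G.card / (r + 1)) * (32 * M) := by
      refine (Nat.cast_le.2 t1).trans ?_
      push_cast
      exact mul_le_mul_of_nonneg_right hch (by positivity)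
    have t2' : ((∑ R ∈ G.powersetCard r, ∑ q ∈ P,
            ∑ ω ∈ U.filter (fun ω => act R ω ∧ loc q ω), (K ω).card : ℕ) : ℝ)
        ≤ P.card * ((G.card.choose r : ℝ) * (G.card / (r + 1)) * 32) := by
      refine (Nat.cast_le.2 t2).trans ?_
      push_cast
      exact mul_le_mul_of_nonneg_left (mul_le_mul_of_nonneg_right hch (by positivity)) (by positivity)
    have d2 := mul_le_mul_of_nonneg_left t2' (by positivity : (0:ℝ) ≤ 3 / r)
    refine b1.trans ?_
    have : (G.card.choose r : ℝ) * (2 * (32 * M * G.card / (r + 1)) +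
        3 * P.card * (32 * G.card / (r + 1)) / r + 3 * P.card * r)
        = 2 * ((G.card.choose r : ℝ) * (G.card / (r + 1)) * (32 * M))
        + 3 / r * (P.card * ((G.card.choose r : ℝ) * (G.card / (r + 1)) * 32))
        + (G.card.choose r : ℝ) * (3 * P.card * r) := by
      field_simp
    rw [this]
    linarith
  have s1' : (G.card.choose r : ℝ) * ((∑ q ∈ P, deg q : ℕ) : ℝ) ≤
      2 * ((∑ R ∈ G.powersetCard r, ∑ q ∈ PR R, deg q : ℕ) : ℝ) := by exact_mod_cast s1
  refine le_of_mul_le_mul_left (s1'.trans ?_) hpos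
  linarith

/-- Full bound: `n` points, `2 n` arcs. -/
lemma full_bound {α Ω β : Type} (G : Finset α) (U : Finset Ω) (act : Finset α → Ω → Prop)
    (K : Ω → Finset α) (hKG : ∀ ω, K ω ⊆ G)
    (hK : ∀ S ω, act S ω → Disjoint S (K ω))
    (hdef : ∀ S ω, act S ω → ∃ D ⊆ S, D.card ≤ 4 ∧ ∀ S', D ⊆ S' → S' ⊆ S → act S' ω)
    (hM : ∀ S ⊆ G, (U.filter (fun ω => act S ω)).card ≤ 4 * (S.card + 2) ^ 2 + 3 * (S.card + 2))
    (P : Finset β) (inc : β → α → Prop) (loc : β → Ω → Prop)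
    (hloc1 : ∀ S ⊆ G, ∀ q ∈ P, (U.filter (fun ω => act S ω ∧ loc q ω)).card ≤ 1)
    (hloc2 : ∀ S ⊆ G, ∀ q ∈ P, (∀ g ∈ S, ¬ inc q g) → ∃ ω ∈ U, act S ω ∧ loc q ω ∧
      ∀ g ∈ G, inc q g → g ∈ K ω)
    (hco : ∀ q ∈ P, ∀ q' ∈ P, q ≠ q' → (G.filter (fun g => inc q g ∧ inc q' g)).card ≤ 16)
    (n r : ℕ) (hr : 1 ≤ r) (hn1 : r ^ 3 ≤ n) (hn2 : n ≤ (r + 1) ^ 3)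
    (hP : P.card = n) (hG : G.card = 2 * n) :
    ((∑ q ∈ P, (G.filter (fun g => inc q g)).card : ℕ) : ℝ) ≤ 1000000 * n * r := by
  have hr0 : (1 : ℝ) ≤ r := by exact_mod_cast hr
  have hn0 : (0 : ℝ) ≤ n := by positivity
  have hrn : r ≤ n := le_trans (Nat.le_self_pow (by norm_num) r) hn1
  by_cases hr64 : r < 64
  · have h1 : ∑ q ∈ P, (G.filter (fun g => inc q g)).card ≤ n * (2 * n) := by
      rw [← hP, ← smul_eq_mul]
      apply sum_le_card_nsmul
      intro q hq
      rw [hP, ← hG]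
      exact card_le_card (filter_subset _ _)
    have h2 : n ≤ 64 ^ 3 := hn2.trans (Nat.pow_le_pow_left (by omega) 3)
    have h3 : n * (2 * n) ≤ n * (2 * 64 ^ 3) := by gcongr
    have h4 : ((∑ q ∈ P, (G.filter (fun g => inc q g)).card : ℕ) : ℝ) ≤ ((n * (2 * 64 ^ 3) : ℕ) : ℝ) :=
      Nat.cast_le.2 (h1.trans h3)
    refine h4.trans ?_
    push_cast
    nlinarith
  push Not at hr64
  set PL := P.filter (fun q => 2 * r * (G.filter (fun g => inc q g)).card ≤ G.card) with hPL
  set PH := P.filter (fun q => ¬ 2 * r * (G.filter (fun g => inc q g)).card ≤ G.card) with hPH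
  have hsplit : ∑ q ∈ P, (G.filter (fun g => inc q g)).card
      = ∑ q ∈ PL, (G.filter (fun g => inc q g)).card + ∑ q ∈ PH, (G.filter (fun g => inc q g)).card :=
    (sum_filter_add_sum_filter_not _ _ _).symm
  -- low part
  have low := low_bound G U act K hKG hK hdef r (4 * (r + 3) ^ 2 + 3 * (r + 3)) (by
      intro S hS hSc
      refine (hM S hS).trans ?_
      have : S.card + 2 ≤ r + 3 := by omega
      gcongr) PL inc loc
    (fun S hS q hq => hloc1 S hS q (mem_of_mem_filter q hq))
    (fun S hS q hq => hloc2 S hS q (mem_of_mem_filter q hq))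
    (fun q hq q' hq' => hco q (mem_of_mem_filter q hq) q' (mem_of_mem_filter q' hq'))
    hr (by omega) (fun q hq => (mem_filter.1 hq).2)
  have hPLn : (PL.card : ℝ) ≤ n := by
    rw [← hP]; exact_mod_cast card_le_card (filter_subset _ _)
  -- high part
  have high : ∑ q ∈ PH, (G.filter (fun g => inc q g)).card ≤ 4 * n := by
    by_contra! hlt
    have hw := weak inc PH G (fun q hq q' hq' => hco q (mem_of_mem_filter q hq) q'
      (mem_of_mem_filter q' hq')) _ rfl
    set I := ∑ q ∈ PH, (G.filter (fun g => inc q g)).card with hI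
    have hm : PH.card * n ≤ r * I := by
      rw [hI, mul_sum, ← smul_eq_mul]
      apply card_nsmul_le_sum
      intro q hq
      have := (mem_filter.1 hq).2
      rw [hG] at this
      nlinarith
    rw [hG] at hw
    have w1 : (I : ℝ) ^ 2 ≤ 2 * n * (I + 16 * (PH.card : ℝ) ^ 2) := by exact_mod_cast hw
    have w2 : (PH.card : ℝ) * n ≤ r * I := by exact_mod_cast hm
    have w3 : (4 : ℝ) * n < I := by exact_mod_cast hlt
    have w4 : (64 : ℝ) * r ^ 2 ≤ n := by
      have : 64 * r ^ 2 ≤ n := by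
        calc 64 * r ^ 2 ≤ r * r ^ 2 := Nat.mul_le_mul_right _ hr64
          _ = r ^ 3 := by ring
          _ ≤ n := hn1
      exact_mod_cast this
    have hnpos : (0 : ℝ) < n := by nlinarith
    have w5 : (I : ℝ) ^ 2 < 64 * n * (PH.card : ℝ) ^ 2 := by nlinarith
    have w6 : ((PH.card : ℝ) * n) ^ 2 ≤ (r * I) ^ 2 := by
      apply pow_le_pow_left₀ (by positivity) w2
    have w7 : (n : ℝ) * (I : ℝ) ^ 2 < 64 * r ^ 2 * (I : ℝ) ^ 2 := by
      nlinarith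
    nlinarith [sq_nonneg (I : ℝ)]
  have high' : ((∑ q ∈ PH, (G.filter (fun g => inc q g)).card : ℕ) : ℝ) ≤ 4 * n := by
    exact_mod_cast high
  rw [hsplit, Nat.cast_add]
  have hn2' : (n : ℝ) ≤ (r + 1) ^ 3 := by exact_mod_cast hn2
  have hGr : (G.card : ℝ) = 2 * n := by rw [hG]; push_cast; ring
  rw [hGr] at low
  push_cast at low
  have e1 : (32 : ℝ) * (4 * (r + 3) ^ 2 + 3 * (r + 3)) * (2 * n) / (r + 1) ≤ 3000 * n * r := by
    rw [div_le_iff₀ (by positivity)]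
    have : (32 : ℝ) * (4 * (r + 3) ^ 2 + 3 * (r + 3)) * 2 ≤ 3000 * r * (r + 1) := by nlinarith
    nlinarith [mul_le_mul_of_nonneg_left this hn0]
  have e2 : 3 * (PL.card : ℝ) * (32 * (2 * n) / (r + 1)) / r ≤ 1000 * n * r := by
    rw [div_le_iff₀ (by linarith), mul_div_assoc', div_le_iff₀ (by positivity)]
    have a1 : (n : ℝ) ≤ (2 * r) * (2 * r) * (r + 1) := by nlinarith
    calc 3 * (PL.card : ℝ) * (32 * (2 * n)) ≤ 3 * ((2 * r) * (2 * r) * (r + 1)) * (32 * (2 * n)) := by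
          gcongr; linarith
      _ = 768 * (n * r * r * (r + 1)) := by ring
      _ ≤ 1000 * (n * r * r * (r + 1)) := by
          apply mul_le_mul_of_nonneg_right (by norm_num); positivity
      _ = _ := by ring
  have e3 : 3 * (PL.card : ℝ) * r ≤ 3 * n * r := by gcongr
  have e4 : (n : ℝ) ≤ n * r := by nlinarith
  rw [← Nat.cast_sum] at low
  have e5 : (0 : ℝ) ≤ n * r := by positivity
  linarith

end CSh

namespace ArcSys
variable {ι : Type} {A : ArcSys ι}

open Filter Topology in
lemma pick_a (W : Finset ι) (x y : ℝ) : ∃ a,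
    (∀ g ∈ W, a ≠ A.lo g ∧ a ≠ A.hi g) ∧
    (∀ g ∈ W, ∀ h ∈ W, g ≠ h → A.lo g < a → a < A.hi g → A.lo h < a → a < A.hi h →
      A.f g a ≠ A.f h a) ∧
    (∀ g ∈ W, A.lo g ≤ x → x < A.hi g → A.lo g < a ∧ a < A.hi g) ∧
    (∀ h ∈ W, ¬ (A.lo h ≤ x ∧ x < A.hi h ∧ A.f h x = y) → A.lo h < a → a < A.hi h →
      (A.lo h ≤ x ∧ x < A.hi h) ∧
      ((A.f h x < y ∧ A.f h a < y) ∨ (y < A.f h x ∧ y < A.f h a))) ∧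
    (∀ g ∈ W, ∀ h ∈ W, (A.f g x < A.f h x → A.f g a < A.f h a)) := by
  have hne : ∀ c : ℝ, ∀ᶠ a in 𝓝[>] x, a ≠ c := by
    intro c
    rcases eq_or_ne x c with rfl | h
    · filter_upwards [self_mem_nhdsWithin] with a ha
      exact ne_of_gt ha
    · exact (eventually_ne_nhds h).filter_mono nhdsWithin_le_nhds
  have hlt : ∀ c : ℝ, x < c → ∀ᶠ a in 𝓝[>] x, a < c := fun c hc =>
    (eventually_lt_nhds hc).filter_mono nhdsWithin_le_nhds
  have hgt : ∀ᶠ a in 𝓝[>] x, x < a := self_mem_nhdsWithin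
  have e1 : ∀ᶠ a in 𝓝[>] x, ∀ g ∈ W, a ≠ A.lo g ∧ a ≠ A.hi g := by
    rw [Filter.eventually_all_finset]
    intro g _
    exact (hne _).and (hne _)
  have e2 : ∀ᶠ a in 𝓝[>] x, ∀ g ∈ W, ∀ h ∈ W, g ≠ h → A.lo g < a → a < A.hi g → A.lo h < a → a < A.hi h →
      A.f g a ≠ A.f h a := by
    rw [Filter.eventually_all_finset]
    intro g _
    rw [Filter.eventually_all_finset]
    intro h _
    rcases eq_or_ne g h with rfl | hgh
    · simp
    have hfin : {x : ℝ | A.lo g ≤ x ∧ x ≤ A.hi g ∧ A.lo h ≤ x ∧ x ≤ A.hi h ∧ A.f g x = A.f h x}.Finite :=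
      Set.finite_of_encard_le_coe (k := 2) (by simpa using A.agree g h hgh)
    have : ∀ᶠ a in 𝓝[>] x, ∀ c ∈ hfin.toFinset, a ≠ c := by
      rw [Filter.eventually_all_finset]
      exact fun c _ => hne c
    filter_upwards [this] with a ha _ h1 h2 h3 h4 h5
    refine ha a ?_ rfl
    rw [Set.Finite.mem_toFinset]
    exact ⟨h1.le, h2.le, h3.le, h4.le, h5⟩
  have e3 : ∀ᶠ a in 𝓝[>] x, ∀ g ∈ W, A.lo g ≤ x → x < A.hi g → A.lo g < a ∧ a < A.hi g := by
    rw [Filter.eventually_all_finset]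
    intro g _
    by_cases h2 : x < A.hi g
    · filter_upwards [hgt, hlt _ h2] with a ha hb h1 _
      exact ⟨h1.trans_lt ha, hb⟩
    · exact Eventually.of_forall fun a _ h => absurd h h2
  have hc : ∀ g, ContinuousAt (A.f g) x := fun g => (A.cont g).continuousAt
  have e4 : ∀ᶠ a in 𝓝[>] x, ∀ h ∈ W, ¬ (A.lo h ≤ x ∧ x < A.hi h ∧ A.f h x = y) → A.lo h < a → a < A.hi h →
      (A.lo h ≤ x ∧ x < A.hi h) ∧
      ((A.f h x < y ∧ A.f h a < y) ∨ (y < A.f h x ∧ y < A.f h a)) := by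
    rw [Filter.eventually_all_finset]
    intro h _
    by_cases h1 : A.lo h ≤ x
    swap
    · filter_upwards [hlt _ (not_le.1 h1)] with a ha _ h3
      exact absurd ha h3.not_gt
    by_cases h2 : x < A.hi h
    swap
    · filter_upwards [hgt] with a ha _ _ h3
      exact absurd (h3.trans_le (not_lt.1 h2)) ha.not_gt
    rcases lt_trichotomy (A.f h x) y with h3 | h3 | h3
    · filter_upwards [((hc h).eventually_lt_const h3).filter_mono nhdsWithin_le_nhds] with a ha _ _ _
      exact ⟨⟨h1, h2⟩, Or.inl ⟨h3, ha⟩⟩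
    · exact Eventually.of_forall fun a h => absurd ⟨h1, h2, h3⟩ h
    · filter_upwards [((hc h).eventually_const_lt h3).filter_mono nhdsWithin_le_nhds] with a ha _ _ _
      exact ⟨⟨h1, h2⟩, Or.inr ⟨h3, ha⟩⟩
  have e5 : ∀ᶠ a in 𝓝[>] x, ∀ g ∈ W, ∀ h ∈ W, (A.f g x < A.f h x → A.f g a < A.f h a) := by
    rw [Filter.eventually_all_finset]
    intro g _
    rw [Filter.eventually_all_finset]
    intro h _
    by_cases hl : A.f g x < A.f h x
    · filter_upwards [((hc g).eventually_lt (hc h) hl).filter_mono nhdsWithin_le_nhds] with a ha _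
      exact ha
    · exact Eventually.of_forall fun a h => absurd h hl
  obtain ⟨a, h⟩ := (e1.and (e2.and (e3.and (e4.and e5)))).exists
  exact ⟨a, h⟩

open scoped Classical in
theorem arc_bound {β : Type} (A : ArcSys ι) (G : Finset ι) (s1 s2 : ι) (P : Finset β) (X Y : β → ℝ)
    (hs1 : ∀ q ∈ P, A.lo s1 < X q ∧ X q < A.hi s1 ∧ A.f s1 (X q) < Y q)
    (hs2 : ∀ q ∈ P, A.lo s2 < X q ∧ X q < A.hi s2 ∧ Y q < A.f s2 (X q))
    (inc : β → ι → Prop)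
    (hinc : ∀ q g, inc q g ↔ (A.lo g ≤ X q ∧ X q < A.hi g ∧ A.f g (X q) = Y q))
    (hco : ∀ q ∈ P, ∀ q' ∈ P, q ≠ q' → (G.filter (fun g => inc q g ∧ inc q' g)).card ≤ 16)
    (n r : ℕ) (hr : 1 ≤ r) (hn1 : r ^ 3 ≤ n) (hn2 : n ≤ (r + 1) ^ 3)
    (hP : P.card = n) (hG : G.card = 2 * n) :
    ((∑ q ∈ P, (G.filter (fun g => inc q g)).card : ℕ) : ℝ) ≤ 1000000 * n * r := by
  have hcard : ∀ S : Finset ι, (S ∪ {s1, s2}).card ≤ S.card + 2 := fun S =>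
    (Finset.card_union_le _ _).trans (Nat.add_le_add_left Finset.card_le_two _)
  have hfin : ∀ R : Finset ι, {σ | A.Act R σ}.Finite := fun R =>
    Set.finite_of_encard_le_coe (A.act_encard R)
  have hsub : ∀ S ⊆ G, ∀ g ∈ S ∪ {s1, s2}, g ∈ G ∪ {s1, s2} := fun S hS g hg =>
    Finset.union_subset_union_left hS hg
  choose a ha1 ha2 ha3 ha4 ha5 using fun q => A.pick_a (G ∪ {s1, s2}) (X q) (Y q)
  obtain ⟨loc, hloc⟩ : ∃ loc : β → TCell ι → Prop, ∀ q σ, loc q σ ↔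
      (σ.l < a q ∧ a q < σ.r ∧ A.f σ.B (a q) < Y q ∧ Y q < A.f σ.T (a q)) :=
    ⟨_, fun _ _ => Iff.rfl⟩
  refine CSh.full_bound G (G.powerset.biUnion fun S => (hfin (S ∪ {s1, s2})).toFinset)
    (fun S σ => A.Act (S ∪ {s1, s2}) σ) (fun σ => G.filter (fun g => A.Conf σ g))
    (fun _ => Finset.filter_subset _ _) ?_ ?_ ?_ P inc
    loc ?_ ?_ hco n r hr hn1 hn2 hP hG
  · intro S σ h
    rw [Finset.disjoint_left]
    intro g hg hg2
    exact h.2.2.2.2.1 g (Finset.mem_union_left _ hg) (Finset.mem_filter.1 hg2).2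
  · intro S σ h
    obtain ⟨D, hD, hD4, hD'⟩ := A.act_def h
    refine ⟨D ∩ S, Finset.inter_subset_right, (Finset.card_le_card Finset.inter_subset_left).trans hD4, ?_⟩
    intro S' h1 h2
    refine hD' _ ?_ (Finset.union_subset_union_left h2)
    intro g hg
    rcases Finset.mem_union.1 (hD hg) with h3 | h3
    · exact Finset.mem_union_left _ (h1 (Finset.mem_inter.2 ⟨hg, h3⟩))
    · exact Finset.mem_union_right _ h3
  · intro S hS
    have h1 : (Finset.filter (fun ω => A.Act (S ∪ {s1, s2}) ω)
        (G.powerset.biUnion fun S => (hfin (S ∪ {s1, s2})).toFinset)).card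
        ≤ 4 * (S ∪ {s1, s2}).card ^ 2 + 3 * (S ∪ {s1, s2}).card := by
      have h2 := A.act_encard (S ∪ {s1, s2})
      rw [(hfin (S ∪ {s1, s2})).encard_eq_coe_toFinset_card] at h2
      refine le_trans (Finset.card_le_card ?_) (by exact_mod_cast h2)
      intro σ hσ
      rw [Set.Finite.mem_toFinset]
      exact (Finset.mem_filter.1 hσ).2
    refine h1.trans ?_
    have := hcard S
    gcongr
  · intro S hS q hq
    rw [Finset.card_le_one]
    intro σ hσ τ hτ
    rw [Finset.mem_filter, hloc] at hσ hτ
    obtain ⟨_, h0, h1, h2, h3, h4⟩ := hσ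
    obtain ⟨_, k0, k1, k2, k3, k4⟩ := hτ
    refine A.act_pt_unique h0 k0 ?_ h1 h2 h3 h4 k1 k2 k3 k4
    intro g hg h hh
    exact ha2 q g (hsub S hS g hg) h (hsub S hS h hh)
  · intro S hS q hq hni
    have hni' : ∀ g ∈ S ∪ {s1, s2}, ¬ (A.lo g ≤ X q ∧ X q < A.hi g ∧ A.f g (X q) = Y q) := by
      intro g hg
      rcases Finset.mem_union.1 hg with h | h
      · exact fun h' => hni g h ((hinc q g).2 h')
      · rw [Finset.mem_insert, Finset.mem_singleton] at h
        rcases h with rfl | rfl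
        · exact fun h' => (hs1 q hq).2.2.ne h'.2.2
        · exact fun h' => (hs2 q hq).2.2.ne' h'.2.2
    have m1 : s1 ∈ S ∪ {s1, s2} := by simp
    have m2 : s2 ∈ S ∪ {s1, s2} := by simp
    obtain ⟨σ, hσ, l1, l2, l3, l4⟩ := A.act_exists (R := S ∪ {s1, s2}) (a := a q) (y := Y q)
      (fun g hg => ha1 q g (hsub S hS g hg))
      (fun g hg h hh => ha2 q g (hsub S hS g hg) h (hsub S hS h hh))
      (by
        intro g hg h1 h2
        rcases (ha4 q g (hsub S hS g hg) (hni' g hg) h1 h2).2 with h | h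
        · exact h.2.ne
        · exact h.2.ne')
      (by
        obtain ⟨b1, b2, b3⟩ := hs2 q hq
        obtain ⟨c1, c2⟩ := ha3 q s2 (hsub S hS _ m2) b1.le b2
        refine ⟨s2, m2, c1, c2, ?_⟩
        rcases (ha4 q s2 (hsub S hS _ m2) (hni' s2 m2) c1 c2).2 with h | h
        · exact absurd h.1 b3.not_gt
        · exact h.2)
      (by
        obtain ⟨b1, b2, b3⟩ := hs1 q hq
        obtain ⟨c1, c2⟩ := ha3 q s1 (hsub S hS _ m1) b1.le b2
        refine ⟨s1, m1, c1, c2, ?_⟩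
        rcases (ha4 q s1 (hsub S hS _ m1) (hni' s1 m1) c1 c2).2 with h | h
        · exact h.2
        · exact absurd h.1 b3.not_gt)
    refine ⟨σ, ?_, hσ, (hloc q σ).2 ⟨l1, l2, l3, l4⟩, ?_⟩
    · rw [Finset.mem_biUnion]
      exact ⟨S, Finset.mem_powerset.2 hS, by rw [Set.Finite.mem_toFinset]; exact hσ⟩
    · intro g hg hi
      obtain ⟨i1, i2, i3⟩ := (hinc q g).1 hi
      have hgW : g ∈ G ∪ {s1, s2} := Finset.mem_union_left _ hg
      obtain ⟨c1, c2⟩ := ha3 q g hgW i1 i2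
      obtain ⟨t1, t2, b1, b2, _⟩ := hσ.2.1 _ l1 l2
      have hT := hσ.2.2.1
      have hB := hσ.2.2.2.1
      refine Finset.mem_filter.2 ⟨hg, a q, l1, l2, c1, c2, ?_, ?_⟩
      · refine ha5 q _ (hsub S hS _ hB) _ hgW ?_
        rw [i3]
        rcases (ha4 q _ (hsub S hS _ hB) (hni' _ hB) b1 b2).2 with h | h
        · exact h.1
        · exact absurd h.2 l3.not_gt
      · refine ha5 q _ hgW _ (hsub S hS _ hT) ?_
        rw [i3]
        rcases (ha4 q _ (hsub S hS _ hT) (hni' _ hT) t1 t2).2 with h | h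
        · exact absurd h.2 l4.not_gt
        · exact h.1

end ArcSys


def Circ : Type := {c : ℝ × ℝ × ℝ // 0 < c.2.2}

namespace Circ

def sg (s : Bool) : ℝ := if s then 1 else -1

lemma sg_sq (s : Bool) : sg s ^ 2 = 1 := by cases s <;> norm_num [sg]

def On (c : Circ) (x y : ℝ) : Prop := (x - c.1.1) ^ 2 + (y - c.1.2.1) ^ 2 = c.1.2.2 ^ 2

def fn (i : Circ × Bool) (x : ℝ) : ℝ :=
  i.1.1.2.1 + sg i.2 * √(i.1.1.2.2 ^ 2 - (x - i.1.1.1) ^ 2)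

lemma fn_on (i : Circ × Bool) (x : ℝ) (h1 : i.1.1.1 - i.1.1.2.2 ≤ x) (h2 : x ≤ i.1.1.1 + i.1.1.2.2) :
    On i.1 x (fn i x) := by
  have h := i.1.2
  unfold On fn
  have h3 : 0 ≤ i.1.1.2.2 ^ 2 - (x - i.1.1.1) ^ 2 := by nlinarith
  have h4 := Real.sq_sqrt h3
  have h5 := sg_sq i.2
  rw [add_sub_cancel_left, mul_pow, h4, h5]
  ring

lemma on_dom {c : Circ} {x y : ℝ} (h : On c x y) :
    c.1.1 - c.1.2.2 ≤ x ∧ x ≤ c.1.1 + c.1.2.2 := by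
  have h0 := c.2
  unfold On at h
  have : |x - c.1.1| ≤ c.1.2.2 := abs_le_of_sq_le_sq (by nlinarith [sq_nonneg (y - c.1.2.1)]) h0.le
  rw [abs_le] at this
  constructor <;> linarith [this.1, this.2]

lemma on_fn {c : Circ} {x y : ℝ} (h : On c x y) : ∃ s, fn (c, s) x = y := by
  unfold On at h
  have h1 : c.1.2.2 ^ 2 - (x - c.1.1) ^ 2 = (y - c.1.2.1) ^ 2 := by linarith
  rcases le_total 0 (y - c.1.2.1) with h2 | h2
  · refine ⟨true, ?_⟩
    simp only [fn, sg, h1, Real.sqrt_sq h2]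
    simp
  · refine ⟨false, ?_⟩
    simp only [fn, sg, h1, Real.sqrt_sq_eq_abs, abs_of_nonpos h2]
    simp

lemma two_circ {c d : Circ} (hcd : c ≠ d) {x1 x2 x3 y1 y2 y3 : ℝ} (h12 : x1 ≠ x2) (h13 : x1 ≠ x3)
    (h23 : x2 ≠ x3) (a1 : On c x1 y1) (a2 : On c x2 y2) (a3 : On c x3 y3)
    (b1 : On d x1 y1) (b2 : On d x2 y2) (b3 : On d x3 y3) : False := by
  obtain ⟨⟨a, b, ρ⟩, hρ⟩ := c
  obtain ⟨⟨a', b', ρ'⟩, hρ'⟩ := d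
  simp only [On] at *
  by_cases hb : b' = b
  · subst hb
    by_cases ha : a' = a
    · subst ha
      apply hcd
      have : ρ = ρ' := by
        rw [← pow_left_inj₀ hρ.le hρ'.le (two_ne_zero)]
        linarith
      subst this
      rfl
    · have : (a' - a) * (x1 - x2) = 0 := by linarith
      rcases mul_eq_zero.1 this with h | h
      · exact ha (by linarith)
      · exact h12 (by linarith)
  · have hb' : b' - b ≠ 0 := sub_ne_zero.2 hb
    obtain ⟨m, hm⟩ : ∃ m, m * (b' - b) = -(a' - a) := ⟨-(a' - a) / (b' - b), by field_simp⟩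
    have l2 : y2 - y1 = m * (x2 - x1) := by
      apply mul_right_cancel₀ hb'
      linear_combination (-1/2) * (b2 - b1) + (1/2) * (a2 - a1) - (x2 - x1) * hm
    have l3 : y3 - y1 = m * (x3 - x1) := by
      apply mul_right_cancel₀ hb'
      linear_combination (-1/2) * (b3 - b1) + (1/2) * (a3 - a1) - (x3 - x1) * hm
    have e2 : (x2 - x1) * ((x2 - x1) * (1 + m ^ 2) + 2 * (x1 - a) + 2 * m * (y1 - b)) = 0 := by
      have : y2 = y1 + m * (x2 - x1) := by linarith
      subst this
      linear_combination a2 - a1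
    have e3 : (x3 - x1) * ((x3 - x1) * (1 + m ^ 2) + 2 * (x1 - a) + 2 * m * (y1 - b)) = 0 := by
      have : y3 = y1 + m * (x3 - x1) := by linarith
      subst this
      linear_combination a3 - a1
    have f2 := (mul_eq_zero.1 e2).resolve_left (sub_ne_zero.2 h12.symm)
    have f3 := (mul_eq_zero.1 e3).resolve_left (sub_ne_zero.2 h13.symm)
    have : (x2 - x3) * (1 + m ^ 2) = 0 := by linarith
    rcases mul_eq_zero.1 this with h | h
    · exact h23 (by linarith)
    · nlinarith [sq_nonneg m]

def sys : ArcSys (Circ × Bool) where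
  f := fn
  lo i := i.1.1.1 - i.1.1.2.2
  hi i := i.1.1.1 + i.1.1.2.2
  cont i := by unfold fn; fun_prop
  agree := by
    intro i j hij
    by_cases h : i.1 = j.1
    · refine (Set.encard_le_encard (t := {i.1.1.1 - i.1.1.2.2, i.1.1.1 + i.1.1.2.2}) ?_).trans
        ((Set.encard_insert_le _ _).trans (by rw [Set.encard_singleton]; norm_num))
      rintro x ⟨h1, h2, -, -, h3⟩
      obtain ⟨c, s⟩ := i
      obtain ⟨d, s'⟩ := j
      obtain rfl : c = d := h
      have hs : s ≠ s' := fun h => hij (by rw [h])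
      simp only [fn] at h3 h1 h2
      have h4 : √(c.1.2.2 ^ 2 - (x - c.1.1) ^ 2) = 0 := by
        cases s <;> cases s' <;> simp [sg] at hs h3 ⊢ <;> linarith
      have h0 := c.2
      rw [Real.sqrt_eq_zero (by nlinarith)] at h4
      have h5 : (x - (c.1.1 - c.1.2.2)) * (x - (c.1.1 + c.1.2.2)) = 0 := by linarith
      rcases mul_eq_zero.1 h5 with h | h
      · left; exact sub_eq_zero.1 h
      · right; exact sub_eq_zero.1 h
    · by_contra! hc
      have hc' := Order.add_one_le_of_lt hc
      obtain ⟨t, ht, ht3⟩ := Set.exists_subset_encard_eq hc'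
      have ht3' : t.encard = 3 := by rw [ht3]; norm_num
      obtain ⟨x1, x2, x3, h12, h13, h23, rfl⟩ := Set.encard_eq_three.1 ht3'
      obtain ⟨p1, p2, p3, p4, p5⟩ := ht (show x1 ∈ _ by simp)
      obtain ⟨q1, q2, q3, q4, q5⟩ := ht (show x2 ∈ _ by simp)
      obtain ⟨r1, r2, r3, r4, r5⟩ := ht (show x3 ∈ _ by simp)
      refine two_circ h h12 h13 h23 (fn_on i _ p1 p2) (fn_on i _ q1 q2) (fn_on i _ r1 r2)
        ?_ ?_ ?_
      · rw [p5]; exact fn_on j _ p3 p4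
      · rw [q5]; exact fn_on j _ q3 q4
      · rw [r5]; exact fn_on j _ r3 r4

lemma two_circ_card {c d : Circ} (hcd : c ≠ d) :
    {z : ℝ × ℝ | On c z.1 z.2 ∧ On d z.1 z.2}.encard ≤ (8 : ℕ) := by
  have h1 : {z : ℝ × ℝ | On c z.1 z.2 ∧ On d z.1 z.2} ⊆
      ⋃ s ∈ (Finset.univ : Finset (Bool × Bool)), (fun x => (x, fn (c, s.1) x)) ''
        {x : ℝ | sys.lo (c, s.1) ≤ x ∧ x ≤ sys.hi (c, s.1) ∧ sys.lo (d, s.2) ≤ x ∧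
          x ≤ sys.hi (d, s.2) ∧ sys.f (c, s.1) x = sys.f (d, s.2) x} := by
    rintro ⟨x, y⟩ ⟨h1, h2⟩
    obtain ⟨s, hs⟩ := on_fn h1
    obtain ⟨s', hs'⟩ := on_fn h2
    simp only [Set.mem_iUnion]
    refine ⟨(s, s'), Finset.mem_univ _, x, ⟨(on_dom h1).1, (on_dom h1).2, (on_dom h2).1,
      (on_dom h2).2, ?_⟩, ?_⟩
    · exact hs.trans hs'.symm
    · exact Prod.ext rfl hs
  refine (Set.encard_le_encard h1).trans ((ArcSys.encard_biUnion_le' _ _ 2 ?_).trans ?_)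
  · intro s _
    refine (Set.encard_image_le _ _).trans ?_
    exact_mod_cast sys.agree (c, s.1) (d, s.2) (fun h => hcd (congrArg Prod.fst h))
  · simp

def hyp (t : ℝ) (ht : 0 < t) (p : ℍ) : Circ :=
  ⟨(p.re, p.im * Real.cosh t, p.im * Real.sinh t), mul_pos p.im_pos (Real.sinh_pos_iff.2 ht)⟩

lemma hyp_inj (t : ℝ) (ht : 0 < t) : Function.Injective (hyp t ht) := by
  intro p q h
  have h' := congrArg Subtype.val h
  simp only [hyp, Prod.mk.injEq] at h'
  have h3 := mul_right_cancel₀ (Real.sinh_pos_iff.2 ht).ne' h'.2.2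
  exact UpperHalfPlane.ext (Complex.ext h'.1 h3)

lemma hyp_on (t : ℝ) (ht : 0 < t) (p q : ℍ) : On (hyp t ht p) q.re q.im ↔ dist q p = t := by
  rw [UpperHalfPlane.dist_eq_iff_dist_coe_center_eq, Complex.dist_eq_re_im,
    Real.sqrt_eq_iff_eq_sq (by positivity)
      (mul_pos p.im_pos (Real.sinh_pos_iff.2 ht)).le]
  simp only [On, hyp, UpperHalfPlane.coe_re, UpperHalfPlane.coe_im, UpperHalfPlane.center_re,
    UpperHalfPlane.center_im]

end Circ


namespace Circ

open scoped Classical in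
lemma count (P : Finset ℍ) (t : ℝ) (ht : 0 < t) (n r : ℕ) (hr : 1 ≤ r) (hn1 : r ^ 3 ≤ n)
    (hn2 : n ≤ (r + 1) ^ 3) (hP : P.card = n) :
    (((P ×ˢ P).filter (fun x => dist x.1 x.2 = t)).card : ℝ) ≤ 1000001 * n * r := by
  obtain ⟨inc, hinc⟩ : ∃ inc : ℍ → Circ × Bool → Prop, ∀ q g, inc q g ↔
      (sys.lo g ≤ q.re ∧ q.re < sys.hi g ∧ sys.f g q.re = q.im) := ⟨_, fun _ _ => Iff.rfl⟩
  have hincOn : ∀ q g, inc q g → On g.1 q.re q.im := by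
    intro q g h
    obtain ⟨h1, h2, h3⟩ := (hinc q g).1 h
    rw [← h3]
    exact fn_on g _ h1 h2.le
  set e : ℍ × Bool → Circ × Bool := fun x => (hyp t ht x.1, x.2) with he
  have hei : Function.Injective e := by
    rintro ⟨p, s⟩ ⟨q, s'⟩ h
    simp only [he, Prod.mk.injEq] at h
    exact Prod.ext (hyp_inj t ht h.1) h.2
  set G : Finset (Circ × Bool) := (P ×ˢ Finset.univ).image e with hGd
  have hG : G.card = 2 * n := by
    rw [hGd, Finset.card_image_of_injective _ hei, Finset.card_product, hP]
    simp [mul_comm]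
  set M : ℝ := 1 + ∑ q ∈ P, (q.re ^ 2 + q.im ^ 2) with hM
  have hM1 : 1 ≤ M := by
    have : 0 ≤ ∑ q ∈ P, (q.re ^ 2 + q.im ^ 2) := Finset.sum_nonneg fun q _ => by positivity
    linarith
  have hMq : ∀ q ∈ P, q.re ^ 2 + q.im ^ 2 < M ^ 2 := by
    intro q hq
    have := Finset.single_le_sum (f := fun q : ℍ => q.re ^ 2 + q.im ^ 2)
      (fun q _ => by positivity) hq
    nlinarith
  have hM0 : 0 < M := by linarith
  set c0 : Circ := ⟨(0, 0, M), hM0⟩ with hc0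
  have hsen : ∀ q ∈ P, -M < q.re ∧ q.re < M ∧ q.im < √(M ^ 2 - q.re ^ 2) := by
    intro q hq
    have h := hMq q hq
    have h1 : |q.re| < M := abs_lt_of_sq_lt_sq (by nlinarith [sq_nonneg q.im]) hM0.le
    rw [abs_lt] at h1
    refine ⟨h1.1, h1.2, ?_⟩
    rw [Real.lt_sqrt q.im_pos.le]
    linarith
  have key := ArcSys.arc_bound sys G (c0, false) (c0, true) P (fun q => q.re) (fun q => q.im)
    (by
      intro q hq
      obtain ⟨h1, h2, h3⟩ := hsen q hq
      simp only [sys, fn, sg, hc0]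
      refine ⟨by linarith, by linarith, ?_⟩
      simp
      linarith [q.im_pos])
    (by
      intro q hq
      obtain ⟨h1, h2, h3⟩ := hsen q hq
      simp only [sys, fn, sg, hc0]
      refine ⟨by linarith, by linarith, ?_⟩
      simpa using h3) inc hinc
    (by
      intro q hq q' hq' hne
      have hne' : hyp t ht q ≠ hyp t ht q' := fun h => hne (hyp_inj t ht h)
      set S := P.filter (fun p => dist q p = t ∧ dist q' p = t) with hS
      have hS8 : S.card ≤ 8 := by
        have h1 := two_circ_card hne'
        have hinj : Function.Injective (fun p : ℍ => (p.re, p.im)) := by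
          intro p p' h
          simp only [Prod.mk.injEq] at h
          exact UpperHalfPlane.ext (Complex.ext h.1 h.2)
        have h2 : ((S.image (fun p : ℍ => (p.re, p.im)) : Finset (ℝ × ℝ)) : Set (ℝ × ℝ)) ⊆
            {z : ℝ × ℝ | On (hyp t ht q) z.1 z.2 ∧ On (hyp t ht q') z.1 z.2} := by
          intro z hz
          rw [Finset.mem_coe, Finset.mem_image] at hz
          obtain ⟨p, hp, rfl⟩ := hz
          obtain ⟨-, h1, h2⟩ := Finset.mem_filter.1 hp
          exact ⟨(hyp_on t ht q p).2 (by rw [dist_comm]; exact h1),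
            (hyp_on t ht q' p).2 (by rw [dist_comm]; exact h2)⟩
        have h3 := (Set.encard_le_encard h2).trans h1
        rw [Set.encard_coe_eq_coe_finsetCard, Finset.card_image_of_injective _ hinj] at h3
        exact_mod_cast h3
      have h4 : G.filter (fun g => inc q g ∧ inc q' g) ⊆ (S ×ˢ Finset.univ).image e := by
        intro g hg
        obtain ⟨hg1, hg2, hg3⟩ := Finset.mem_filter.1 hg
        obtain ⟨⟨p, s⟩, hx, rfl⟩ := Finset.mem_image.1 hg1
        refine Finset.mem_image_of_mem _ (Finset.mem_product.2 ⟨?_, Finset.mem_univ _⟩)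
        refine Finset.mem_filter.2 ⟨(Finset.mem_product.1 hx).1, ?_, ?_⟩
        · exact (hyp_on t ht p q).1 (hincOn _ _ hg2)
        · exact (hyp_on t ht p q').1 (hincOn _ _ hg3)
      refine (Finset.card_le_card h4).trans (Finset.card_image_le.trans ?_)
      rw [Finset.card_product]
      simp
      omega)
    n r hr hn1 hn2 hP hG
  set T := (P ×ˢ P).filter (fun x => dist x.1 x.2 = t) with hT
  have hTon : ∀ x ∈ T, x.1 ∈ P ∧ x.2 ∈ P ∧ On (hyp t ht x.1) x.2.re x.2.im := by
    intro x hx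
    obtain ⟨h1, h2⟩ := Finset.mem_filter.1 hx
    obtain ⟨h3, h4⟩ := Finset.mem_product.1 h1
    exact ⟨h3, h4, (hyp_on t ht _ _).2 (by rw [dist_comm]; exact h2)⟩
  have hT1 : (T.filter (fun x => x.2.re < sys.hi (hyp t ht x.1, true))).card ≤
      ∑ q ∈ P, (G.filter (fun g => inc q g)).card := by
    rw [← Finset.card_sigma]
    have hs : ∀ x : ℍ × ℍ, ∃ s, x ∈ T → fn (hyp t ht x.1, s) x.2.re = x.2.im := by
      intro x
      by_cases hx : x ∈ T
      · obtain ⟨s, hs⟩ := on_fn (hTon x hx).2.2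
        exact ⟨s, fun _ => hs⟩
      · exact ⟨true, fun h => absurd h hx⟩
    choose s hs using hs
    refine Finset.card_le_card_of_injOn (fun x => ⟨x.2, e (x.1, s x)⟩) ?_ ?_
    · intro x hx
      obtain ⟨hx1, hx2⟩ := Finset.mem_filter.1 hx
      obtain ⟨h1, h2, h3⟩ := hTon x hx1
      refine Finset.mem_sigma.2 ⟨h2, Finset.mem_filter.2 ⟨?_, ?_⟩⟩
      · exact Finset.mem_image_of_mem _ (Finset.mem_product.2 ⟨h1, Finset.mem_univ _⟩)
      · exact (hinc _ _).2 ⟨(on_dom h3).1, hx2, hs x hx1⟩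
    · intro x _ y _ hxy
      simp only [Sigma.mk.injEq, heq_eq_eq] at hxy
      have h2 := hei hxy.2
      exact Prod.ext (Prod.mk.inj h2).1 hxy.1
  have hT2 : (T.filter (fun x => ¬ x.2.re < sys.hi (hyp t ht x.1, true))).card ≤ n := by
    rw [← hP]
    refine Finset.card_le_card_of_injOn (fun x => x.1) ?_ ?_
    · intro x hx
      exact (hTon x (Finset.mem_filter.1 hx).1).1
    · have hd : ∀ x ∈ T, ¬ x.2.re < sys.hi (hyp t ht x.1, true) →
          x.2.re = (hyp t ht x.1).1.1 + (hyp t ht x.1).1.2.2 ∧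
          x.2.im = (hyp t ht x.1).1.2.1 := by
        intro x hx h
        have h3 := (hTon x hx).2.2
        have h4 : x.2.re = (hyp t ht x.1).1.1 + (hyp t ht x.1).1.2.2 :=
          le_antisymm (on_dom h3).2 (not_lt.1 h)
        refine ⟨h4, ?_⟩
        unfold On at h3
        rw [h4] at h3
        have : (x.2.im - (hyp t ht x.1).1.2.1) ^ 2 = 0 := by linarith
        exact sub_eq_zero.1 (pow_eq_zero_iff two_ne_zero |>.1 this)
      intro x hx y hy hxy
      obtain ⟨hx1, hx2⟩ := Finset.mem_filter.1 hx
      obtain ⟨hy1, hy2⟩ := Finset.mem_filter.1 hy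
      obtain ⟨a1, a2⟩ := hd x hx1 hx2
      obtain ⟨b1, b2⟩ := hd y hy1 hy2
      have hxy' : x.1 = y.1 := hxy
      rw [← hxy'] at b1 b2
      exact Prod.ext hxy' (UpperHalfPlane.ext (Complex.ext (a1.trans b1.symm) (a2.trans b2.symm)))
  have hsum := Finset.card_filter_add_card_filter_not (s := T)
    (fun x : ℍ × ℍ => x.2.re < sys.hi (hyp t ht x.1, true))
  have h5 : T.card ≤ (∑ q ∈ P, (G.filter (fun g => inc q g)).card) + n := by omega
  have h6 : (T.card : ℝ) ≤ ((∑ q ∈ P, (G.filter (fun g => inc q g)).card : ℕ) : ℝ) + n := by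
    exact_mod_cast h5
  have h7 : (1 : ℝ) ≤ r := by exact_mod_cast hr
  have h8 : (0 : ℝ) ≤ n := by positivity
  nlinarith

end Circ

/-- There is an absolute constant `C > 0` such that for every finite set `P` of `N`
points in the hyperbolic plane and every `t > 0`, the number of ordered pairs of points
of `P` at distance exactly `t` is at most `C · N^(4/3)`. -/
theorem unit_distances_hyperbolic_plane :
    ∃ C : ℝ, 0 < C ∧ ∀ (P : Finset ℍ) (t : ℝ), 0 < t →
      ({x : ℍ × ℍ | x.1 ∈ P ∧ x.2 ∈ P ∧ dist x.1 x.2 = t}.ncard : ℝ) ≤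
        C * (P.card : ℝ) ^ ((4 : ℝ) / 3) := by
  classical
  refine ⟨1000001, by norm_num, ?_⟩
  intro P t ht
  have hset : {x : ℍ × ℍ | x.1 ∈ P ∧ x.2 ∈ P ∧ dist x.1 x.2 = t} =
      (((P ×ˢ P).filter (fun x => dist x.1 x.2 = t) : Finset (ℍ × ℍ)) : Set (ℍ × ℍ)) := by
    ext x
    simp [and_assoc]
  rw [hset, Set.ncard_coe_finset]
  rcases P.eq_empty_or_nonempty with rfl | hne
  · simp
  have hn : 1 ≤ P.card := hne.card_pos
  set n := P.card with hnd
  have hn0 : (0 : ℝ) ≤ n := by positivity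
  set u : ℝ := (n : ℝ) ^ ((1 : ℝ) / 3) with hu
  have hu1 : 1 ≤ u := Real.one_le_rpow (by exact_mod_cast hn) (by norm_num)
  have hu3 : u ^ 3 = n := by
    rw [hu, ← Real.rpow_natCast, ← Real.rpow_mul hn0]
    norm_num
  have hu4 : (n : ℝ) ^ ((4 : ℝ) / 3) = n * u := by
    rw [show (4 : ℝ) / 3 = 1 + 1 / 3 by norm_num, Real.rpow_add (by exact_mod_cast hn),
      Real.rpow_one]
  have hf1 : (⌊u⌋₊ : ℝ) ≤ u := Nat.floor_le (by linarith)
  have hf2 : u < ⌊u⌋₊ + 1 := Nat.lt_floor_add_one u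
  have h1 : 1 ≤ ⌊u⌋₊ := (Nat.one_le_floor_iff _).2 hu1
  have h2 : ⌊u⌋₊ ^ 3 ≤ n := by
    have : (⌊u⌋₊ : ℝ) ^ 3 ≤ n := by rw [← hu3]; gcongr
    exact_mod_cast this
  have h3 : n ≤ (⌊u⌋₊ + 1) ^ 3 := by
    have : (n : ℝ) ≤ ((⌊u⌋₊ : ℝ) + 1) ^ 3 := by rw [← hu3]; gcongr
    exact_mod_cast this
  have h4 := Circ.count P t ht n ⌊u⌋₊ h1 h2 h3 hnd.symm
  rw [hu4]
  refine le_trans (le_of_eq_of_le ?_ h4) ?_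
  · congr!
  · have : (n : ℝ) * ⌊u⌋₊ ≤ n * u := by gcongr
    linarith

end
end

section
/- There is an absolute constant C > 0 with the following property. Let Γ ≤ SL(2,ℝ) be a subgroup, let P ⊆ ℍ² be a finite set of N points, and let Γ₀ ⊆ Γ be a finite subset of cardinality K which is a geodesic cover for P. Then for every t > 0, the number of ordered pairs (p,q) ∈ P × P with d_Γ(p,q) = t is at most C · (K·N)^(4/3). -/
open scoped UpperHalfPlane MatrixGroups

noncomputable section

/-- The quotient pseudo-distance `d_Γ(p,q) = inf_{γ ∈ Γ} d(p, γ·q)` associated to a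
subgroup `Γ ≤ SL(2,ℝ)` acting on the hyperbolic plane. -/
def quotDist (Γ : Subgroup SL(2, ℝ)) (p q : ℍ) : ℝ :=
  ⨅ γ : Γ, dist p ((γ : SL(2, ℝ)) • q)


/-- sign constancy -/
lemma sgn_const {f g : ℝ → ℝ} (hf : Continuous f) (hg : Continuous g) {a b x : ℝ}
    (hne : ∀ y, a < y → y < b → f y ≠ g y) (hax : a < x) (hxb : x < b) (hx : f x < g x) :
    (∀ y, a < y → y < b → f y < g y) ∧ (∀ y, a ≤ y → y ≤ b → f y ≤ g y) := by
  have h1 : ∀ y, a < y → y < b → f y < g y := by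
    intro y hay hyb
    by_contra hcon
    have hcon' : g y ≤ f y := not_lt.mp hcon
    have hc : ContinuousOn (fun z => g z - f z) (Set.uIcc y x) := (hg.sub hf).continuousOn
    have hmem : (0:ℝ) ∈ Set.uIcc (g y - f y) (g x - f x) := by
      rw [Set.mem_uIcc]; left; constructor <;> linarith
    obtain ⟨z, hz, hz0⟩ := intermediate_value_uIcc hc hmem
    rw [Set.mem_uIcc] at hz
    have : f z = g z := by simp only at hz0; linarith
    refine hne z ?_ ?_ this <;> rcases hz with hz | hz <;> linarith [hz.1, hz.2]
  refine ⟨h1, ?_⟩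
  have hab : a < b := hax.trans hxb
  intro y hay hyb
  have hcl : y ∈ closure (Set.Ioo a b) := by
    rw [closure_Ioo hab.ne]; exact ⟨hay, hyb⟩
  have hsub : closure (Set.Ioo a b) ⊆ {z | f z ≤ g z} :=
    closure_minimal (fun z hz => (h1 z hz.1 hz.2).le) (isClosed_le hf hg)
  exact hsub hcl

lemma planar_bound {ι : Type*} (S : Finset (ℝ × ℝ)) (E : Finset ι)
    (L R : ι → ℝ × ℝ) (F : ι → ℝ → ℝ)
    (hL : ∀ e ∈ E, L e ∈ S) (hR : ∀ e ∈ E, R e ∈ S)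
    (hlt : ∀ e ∈ E, (L e).1 < (R e).1)
    (hFL : ∀ e ∈ E, F e (L e).1 = (L e).2) (hFR : ∀ e ∈ E, F e (R e).1 = (R e).2)
    (hc : ∀ e ∈ E, Continuous (F e))
    (hA : ∀ e ∈ E, ∀ w ∈ S, (L e).1 < w.1 → w.1 < (R e).1 → F e w.1 ≠ w.2)
    (hB : ∀ e ∈ E, ∀ g ∈ E, e ≠ g → ∀ x, (L e).1 < x → x < (R e).1 → (L g).1 < x →
      x < (R g).1 → F e x ≠ F g x)
    (hC : ∀ e ∈ E, ∀ g ∈ E, L e = L g → R e = R g → e = g) :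
    E.card ≤ 3 * S.card := by
  classical
  -- order facts
  have key : ∀ e ∈ E, ∀ g ∈ E, ∀ x, (L e).1 < x → x < (R e).1 → (L g).1 < x →
      x < (R g).1 → F e x < F g x →
      (∀ y, (L e).1 < y → y < (R e).1 → (L g).1 < y → y < (R g).1 → F e y < F g y) ∧
      (∀ y, (L e).1 ≤ y → y ≤ (R e).1 → (L g).1 ≤ y → y ≤ (R g).1 → F e y ≤ F g y) := by
    intro e he g hg x h1 h2 h3 h4 h5
    have hne : e ≠ g := by rintro rfl; exact lt_irrefl _ h5
    have := sgn_const (a := max (L e).1 (L g).1) (b := min (R e).1 (R g).1) (x := x)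
      (hc e he) (hc g hg) (fun y hy1 hy2 => by
        rw [max_lt_iff] at hy1; rw [lt_min_iff] at hy2
        exact hB e he g hg hne y hy1.1 hy2.1 hy1.2 hy2.2) (max_lt h1 h3) (lt_min h2 h4) h5
    exact ⟨fun y a b c d => this.1 y (max_lt a c) (lt_min b d),
      fun y a b c d => this.2 y (max_le a c) (le_min b d)⟩
  -- above relation
  let ab : ι → ι → Prop := fun e g => ∃ x, (L e).1 < x ∧ x < (R e).1 ∧ (L g).1 < x ∧
      x < (R g).1 ∧ F e x < F g x
  let E1 := E.filter (fun e => ∃ w ∈ S, (L e).1 < w.1 ∧ w.1 < (R e).1 ∧ F e w.1 < w.2 ∧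
    ∀ g ∈ E, (L g).1 < w.1 → w.1 < (R g).1 → F e w.1 < F g w.1 → ¬ F g w.1 < w.2)
  let E2 := E.filter (fun e => ∀ g ∈ E, L g = L e → ¬ ab e g)
  let E3 := E.filter (fun e => ∀ g ∈ E, R g = R e → ¬ ab e g)
  have tri : ∀ e g x, e ∈ E → g ∈ E → e ≠ g → (L e).1 < x → x < (R e).1 → (L g).1 < x →
      x < (R g).1 → ab e g ∨ ab g e := by
    intro e g x he hg hne h1 h2 h3 h4
    rcases lt_or_gt_of_ne (hB e he g hg hne x h1 h2 h3 h4) with h | h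
    · exact Or.inl ⟨x, h1, h2, h3, h4, h⟩
    · exact Or.inr ⟨x, h3, h4, h1, h2, h⟩
  have c2 : E2.card ≤ S.card := by
    apply Finset.card_le_card_of_injOn L
    · intro e he; exact hL e (Finset.mem_filter.mp he).1
    · intro e he g hg hh
      simp only [E2, Finset.coe_filter, Set.mem_ofPred_eq] at he hg
      by_contra hne
      have h1 := hlt e he.1
      have h2 := hlt g hg.1
      obtain ⟨x, hx1, hx2⟩ := exists_between (lt_min h1 (hh ▸ h2))
      rw [lt_min_iff] at hx2
      rcases tri e g x he.1 hg.1 hne hx1 hx2.1 (hh ▸ hx1) hx2.2 with h | h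
      · exact he.2 g hg.1 hh.symm h
      · exact hg.2 e he.1 hh h
  have c3 : E3.card ≤ S.card := by
    apply Finset.card_le_card_of_injOn R
    · intro e he; exact hR e (Finset.mem_filter.mp he).1
    · intro e he g hg hh
      simp only [E3, Finset.coe_filter, Set.mem_ofPred_eq] at he hg
      by_contra hne
      have h1 := hlt e he.1
      have h2 := hlt g hg.1
      obtain ⟨x, hx1, hx2⟩ := exists_between (max_lt h1 (hh ▸ h2))
      rw [max_lt_iff] at hx1
      rcases tri e g x he.1 hg.1 hne hx1.1 hx2 hx1.2 (hh ▸ hx2) with h | h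
      · exact he.2 g hg.1 hh.symm h
      · exact hg.2 e he.1 hh h
  have c1 : E1.card ≤ S.card := by
    have hE1 : ∀ e ∈ E1, ∃ w ∈ S, (L e).1 < w.1 ∧ w.1 < (R e).1 ∧ F e w.1 < w.2 ∧
        ∀ g ∈ E, (L g).1 < w.1 → w.1 < (R g).1 → F e w.1 < F g w.1 → ¬ F g w.1 < w.2 :=
      fun e he => (Finset.mem_filter.mp he).2
    choose! W hW using hE1
    apply Finset.card_le_card_of_injOn W
    · intro e he; exact (hW e he).1
    · intro e he g hg hh
      by_contra hne
      have heE := (Finset.mem_filter.mp he).1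
      have hgE := (Finset.mem_filter.mp hg).1
      obtain ⟨-, a1, a2, a3, a4⟩ := hW e he
      obtain ⟨-, b1, b2, b3, b4⟩ := hW g hg
      rw [← hh] at b1 b2 b3 b4
      rcases lt_or_gt_of_ne (hB e heE g hgE hne _ a1 a2 b1 b2) with h | h
      · exact a4 g hgE b1 b2 h b3
      · exact b4 e heE a1 a2 h a3
  have cov : E ⊆ E1 ∪ (E2 ∪ E3) := by
    intro e he
    by_contra hcon
    simp only [Finset.mem_union, not_or] at hcon
    obtain ⟨n1, n2, n3⟩ := hcon
    have n1' : ∀ w ∈ S, (L e).1 < w.1 → w.1 < (R e).1 → F e w.1 < w.2 →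
        ∃ g ∈ E, (L g).1 < w.1 ∧ w.1 < (R g).1 ∧ F e w.1 < F g w.1 ∧ F g w.1 < w.2 := by
      intro w hw h1 h2 h3
      by_contra hno
      apply n1
      refine Finset.mem_filter.mpr ⟨he, w, hw, h1, h2, h3, ?_⟩
      intro g hg a b c d
      exact hno ⟨g, hg, a, b, c, d⟩
    have n2' : ∃ g ∈ E, L g = L e ∧ ab e g := by
      by_contra hno
      apply n2
      refine Finset.mem_filter.mpr ⟨he, ?_⟩
      intro g hg a b
      exact hno ⟨g, hg, a, b⟩
    have n3' : ∃ g ∈ E, R g = R e ∧ ab e g := by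
      by_contra hno
      apply n3
      refine Finset.mem_filter.mpr ⟨he, ?_⟩
      intro g hg a b
      exact hno ⟨g, hg, a, b⟩
    -- the lowest edge above e from L e
    obtain ⟨e1, he1, hL1, hab1, hmin⟩ : ∃ g ∈ E, L g = L e ∧ ab e g ∧
        ∀ g' ∈ E, L g' = L e → ab e g' → ¬ ab g' g := by
      let T := E.filter (fun g => L g = L e ∧ ab e g)
      have hT : T.Nonempty := by
        obtain ⟨g, a, b, c⟩ := n2'
        exact ⟨g, Finset.mem_filter.mpr ⟨a, b, c⟩⟩
      -- common abscissa
      obtain ⟨m, hm, hmm⟩ := Finset.exists_min_image T (fun g => (R g).1) hT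
      have hmT := Finset.mem_filter.mp hm
      have hmlt := hlt m hmT.1
      rw [hmT.2.1] at hmlt
      obtain ⟨x, hx1, hx2⟩ := exists_between hmlt
      obtain ⟨g, hg, hgm⟩ := Finset.exists_min_image T (fun g => F g x) hT
      have hgT := Finset.mem_filter.mp hg
      refine ⟨g, hgT.1, hgT.2.1, hgT.2.2, ?_⟩
      rintro g' hg' hl' hab' ⟨z, z1, z2, z3, z4, z5⟩
      have hg'T : g' ∈ T := Finset.mem_filter.mpr ⟨hg', hl', hab'⟩
      have := (key g' hg' g hgT.1 z z1 z2 z3 z4 z5).1 x (hl' ▸ hx1)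
        (hx2.trans_le (hmm g' hg'T)) (hgT.2.1 ▸ hx1) (hx2.trans_le (hmm g hg))
      exact absurd (hgm g' hg'T) (not_le.mpr this)
    obtain ⟨x1, x1a, x1b, x1c, x1d, x1e⟩ := hab1
    obtain ⟨k1, k2⟩ := key e he e1 he1 x1 x1a x1b x1c x1d x1e
    rw [hL1] at k1 k2 x1c
    -- main squeeze: an edge g, above e and below e1 at some point, has its left endpoint
    -- strictly right of L e
    have sq : ∀ g ∈ E, ab e g → ab g e1 → (L e).1 < (L g).1 := by
      intro g hg h1 h2
      by_contra hle
      rw [not_lt] at hle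
      have h2' := h2
      have h1' := h1
      obtain ⟨y, y1, y2, y3, y4, y5⟩ := h1
      obtain ⟨z, z1, z2, z3, z4, z5⟩ := h2
      have i1 := (key e he g hg y y1 y2 y3 y4 y5).2 (L e).1 le_rfl (hlt e he).le hle (y1.trans y4).le
      have hz3 : (L e).1 < z := by rw [← hL1]; exact z3
      have i2 := (key g hg e1 he1 z z1 z2 z3 z4 z5).2 (L e).1 hle (y1.trans y4).le
        (by rw [hL1]) (hz3.trans z4).le
      have e1L : F e1 (L e).1 = (L e).2 := by rw [← hL1]; exact hFL e1 he1
      have heq : F g (L e).1 = (L e).2 := by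
        apply le_antisymm
        · rw [← e1L]; exact i2
        · rw [← hFL e he]; exact i1
      rcases hle.lt_or_eq with hlt' | heq'
      · exact hA g hg (L e) (hL e he) hlt' (y1.trans y4) heq
      · have : L g = L e := by
          apply Prod.ext heq'
          rw [← hFL g hg, heq', heq]
        exact hmin g hg this h1' h2'
    -- region
    let Reg := S.filter (fun w => (L e).1 < w.1 ∧ w.1 < (R e).1 ∧ w.1 ≤ (R e1).1 ∧
      F e w.1 < w.2 ∧ w.2 ≤ F e1 w.1)
    have hRegE : ¬ Reg.Nonempty := by
      intro hne
      obtain ⟨w, hw, hwm⟩ := Finset.exists_min_image Reg (fun w => w.1) hne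
      obtain ⟨hwS, w1, w2, w3, w4, w5⟩ := Finset.mem_filter.mp hw
      obtain ⟨g, hg, g1, g2, g3, g4⟩ := n1' w hwS w1 w2 w4
      have habg : ab e g := ⟨w.1, w1, w2, g1, g2, g3⟩
      have hlt1 : F g w.1 < F e1 w.1 := g4.trans_le w5
      have habg1 : ab g e1 := by
        -- go slightly to the left of w
        have ho : IsOpen {y | F g y < F e1 y} := isOpen_lt (hc g hg) (hc e1 he1)
        have hn : {y | F g y < F e1 y} ∈ nhds w.1 := ho.mem_nhds hlt1
        obtain ⟨y, hy1, hy2⟩ : ∃ y, (y ∈ Set.Ioo (max (L e).1 (L g).1) w.1) ∧ F g y < F e1 y := by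
          have h1 : ∀ᶠ y in nhdsWithin w.1 (Set.Iio w.1), F g y < F e1 y :=
            nhdsWithin_le_nhds hn
          have h2 : ∀ᶠ y in nhdsWithin w.1 (Set.Iio w.1),
              y ∈ Set.Ioo (max (L e).1 (L g).1) w.1 := Ioo_mem_nhdsLT (max_lt w1 g1)
          exact (h2.and h1).exists
        have hy3 := max_lt_iff.mp hy1.1
        exact ⟨y, hy3.2, hy1.2.trans g2, by rw [hL1]; exact hy3.1, hy1.2.trans_le w3, hy2⟩
      have hs := sq g hg habg habg1
      obtain ⟨z, z1, z2, z3, z4, z5⟩ := habg1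
      have hgl := (key g hg e1 he1 z z1 z2 z3 z4 z5).2 (L g).1 le_rfl (hlt g hg).le
        (by rw [hL1]; exact hs.le) (z1.trans z4).le
      have hgl2 := (key e he g hg w.1 w1 w2 g1 g2 g3).2 (L g).1 hs.le (g1.trans w2).le
        le_rfl (hlt g hg).le
      have hgne := hA e he (L g) (hL g hg) hs (g1.trans w2)
      rw [hFL g hg] at hgl hgl2
      have hmem : L g ∈ Reg := Finset.mem_filter.mpr ⟨hL g hg, hs, g1.trans w2,
        (g1.trans_le w3).le, lt_of_le_of_ne hgl2 hgne, hgl⟩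
      exact absurd (hwm _ hmem) (not_le.mpr g1)
    apply hRegE
    have hr1 : (L e).1 < (R e1).1 := by rw [← hL1]; exact hlt e1 he1
    rcases lt_or_ge (R e1).1 (R e).1 with hcase | hcase
    · refine ⟨R e1, Finset.mem_filter.mpr ⟨hR e1 he1, hr1, hcase, le_rfl, ?_, (hFR e1 he1).ge⟩⟩
      have h1 := k2 (R e1).1 hr1.le hcase.le hr1.le le_rfl
      rw [hFR e1 he1] at h1
      exact lt_of_le_of_ne h1 (hA e he (R e1) (hR e1 he1) hr1 hcase)
    · obtain ⟨g, hg, hRg, habg⟩ := n3'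
      have hrr := hlt e he
      have h1 : F e (R e).1 ≤ F e1 (R e).1 := k2 (R e).1 hrr.le le_rfl hrr.le hcase
      have hne1 : e ≠ e1 := by rintro rfl; exact lt_irrefl _ x1e
      have h2 : F e1 (R e).1 ≠ (R e).2 := by
        rcases hcase.lt_or_eq with h | h
        · exact hA e1 he1 (R e) (hR e he) (by rw [hL1]; exact hrr) h
        · intro h'
          apply hne1
          apply hC e he e1 he1 hL1.symm
          apply Prod.ext h
          rw [← hFR e1 he1, ← h, h']
      have h3 : F g (R e).1 < F e1 (R e).1 := by
        have : F g (R e).1 = (R e).2 := by rw [← hRg]; exact hFR g hg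
        rw [this]
        rw [hFR e he] at h1
        exact lt_of_le_of_ne h1 h2.symm
      have hgl : (L g).1 < (R e).1 := by rw [← hRg]; exact hlt g hg
      have habg1 : ab g e1 := by
        have ho : IsOpen {y | F g y < F e1 y} := isOpen_lt (hc g hg) (hc e1 he1)
        have hn : {y | F g y < F e1 y} ∈ nhds (R e).1 := ho.mem_nhds h3
        obtain ⟨y, hy1, hy2⟩ : ∃ y, (y ∈ Set.Ioo (max (L e).1 (L g).1) (R e).1) ∧
            F g y < F e1 y := by
          have h1 : ∀ᶠ y in nhdsWithin (R e).1 (Set.Iio (R e).1), F g y < F e1 y :=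
            nhdsWithin_le_nhds hn
          have h2 : ∀ᶠ y in nhdsWithin (R e).1 (Set.Iio (R e).1),
              y ∈ Set.Ioo (max (L e).1 (L g).1) (R e).1 := Ioo_mem_nhdsLT (max_lt hrr hgl)
          exact (h2.and h1).exists
        have hy3 := max_lt_iff.mp hy1.1
        exact ⟨y, hy3.2, by rw [hRg]; exact hy1.2, by rw [hL1]; exact hy3.1,
          hy1.2.trans_le hcase, hy2⟩
      have hs := sq g hg habg habg1
      obtain ⟨z, z1, z2, z3, z4, z5⟩ := habg1
      obtain ⟨y, y1, y2, y3, y4, y5⟩ := habg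
      have hgl1 := (key g hg e1 he1 z z1 z2 z3 z4 z5).2 (L g).1 le_rfl (hlt g hg).le
        (by rw [hL1]; exact hs.le) (z1.trans z4).le
      have hgl2 := (key e he g hg y y1 y2 y3 y4 y5).2 (L g).1 hs.le hgl.le
        le_rfl (hlt g hg).le
      have hgne := hA e he (L g) (hL g hg) hs hgl
      rw [hFL g hg] at hgl1 hgl2
      exact ⟨L g, Finset.mem_filter.mpr ⟨hL g hg, hs, hgl, (hgl.trans_le hcase).le,
        lt_of_le_of_ne hgl2 hgne, hgl1⟩⟩
  calc E.card ≤ (E1 ∪ (E2 ∪ E3)).card := Finset.card_le_card cov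
    _ ≤ E1.card + (E2 ∪ E3).card := Finset.card_union_le _ _
    _ ≤ E1.card + (E2.card + E3.card) := by gcongr; exact Finset.card_union_le _ _
    _ ≤ 3 * S.card := by omega

lemma planar_del {ι : Type*} (S : Finset (ℝ × ℝ)) (E : Finset ι)
    (L R : ι → ℝ × ℝ) (F : ι → ℝ → ℝ) (X : Finset (ι × ι))
    (hL : ∀ e ∈ E, L e ∈ S) (hR : ∀ e ∈ E, R e ∈ S)
    (hlt : ∀ e ∈ E, (L e).1 < (R e).1)
    (hFL : ∀ e ∈ E, F e (L e).1 = (L e).2) (hFR : ∀ e ∈ E, F e (R e).1 = (R e).2)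
    (hc : ∀ e ∈ E, Continuous (F e))
    (hA : ∀ e ∈ E, ∀ w ∈ S, (L e).1 < w.1 → w.1 < (R e).1 → F e w.1 ≠ w.2)
    (hX : ∀ e ∈ E, ∀ g ∈ E, e ≠ g → ∀ x, (L e).1 < x → x < (R e).1 → (L g).1 < x →
      x < (R g).1 → F e x = F g x → (e, g) ∈ X)
    (hC : ∀ e ∈ E, ∀ g ∈ E, L e = L g → R e = R g → e = g) :
    E.card ≤ 3 * S.card + X.card := by
  classical
  have h := planar_bound S (E \ X.image Prod.fst) L R F
    (fun e he => hL e (Finset.mem_sdiff.mp he).1) (fun e he => hR e (Finset.mem_sdiff.mp he).1)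
    (fun e he => hlt e (Finset.mem_sdiff.mp he).1) (fun e he => hFL e (Finset.mem_sdiff.mp he).1)
    (fun e he => hFR e (Finset.mem_sdiff.mp he).1) (fun e he => hc e (Finset.mem_sdiff.mp he).1)
    (fun e he => hA e (Finset.mem_sdiff.mp he).1)
    (fun e he g hg hne x a b c d heq => (Finset.mem_sdiff.mp he).2
      (Finset.mem_image.mpr ⟨(e, g), hX e (Finset.mem_sdiff.mp he).1 g
        (Finset.mem_sdiff.mp hg).1 hne x a b c d heq, rfl⟩))
    (fun e he g hg => hC e (Finset.mem_sdiff.mp he).1 g (Finset.mem_sdiff.mp hg).1)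
  have h1 : E.card ≤ (E \ X.image Prod.fst).card + (X.image Prod.fst).card :=
    Finset.card_le_card_sdiff_add_card
  have h2 : (X.image Prod.fst).card ≤ X.card := Finset.card_image_le
  omega

lemma count_chi {α : Type*} [DecidableEq α] (V T : Finset α) (hT : T ⊆ V) (k : ℕ) :
    (Finset.univ.filter (fun χ : V → Fin (k + 1) => ∀ v : V, v.1 ∈ T → χ v = 0)).card
      * (k + 1) ^ T.card = (k + 1) ^ V.card := by
  have h1 : (Finset.univ.filter (fun χ : V → Fin (k + 1) => ∀ v : V, v.1 ∈ T → χ v = 0))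
      = Fintype.piFinset (fun v : V => if v.1 ∈ T then ({0} : Finset (Fin (k+1))) else Finset.univ) := by
    ext χ
    simp only [Finset.mem_filter, Finset.mem_univ, true_and, Fintype.mem_piFinset]
    refine forall_congr' fun v => ?_
    by_cases hv : v.1 ∈ T <;> simp [hv]
  rw [h1, Fintype.card_piFinset]
  have h2 : ∀ v : V, (if v.1 ∈ T then ({0} : Finset (Fin (k+1))) else Finset.univ).card
      = if v.1 ∈ T then 1 else k + 1 := by
    intro v; by_cases hv : v.1 ∈ T <;> simp [hv]
  simp_rw [h2]
  rw [Finset.prod_coe_sort V (fun v => if v ∈ T then 1 else k + 1)]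
  rw [← Finset.prod_sdiff hT]
  have h3 : ∏ x ∈ V \ T, (if x ∈ T then 1 else k + 1) = (k+1) ^ (V \ T).card := by
    rw [Finset.prod_congr rfl (g := fun _ => k + 1)]
    · simp
    · intro x hx; simp [(Finset.mem_sdiff.mp hx).2]
  have h4 : ∏ x ∈ T, (if x ∈ T then 1 else k + 1) = 1 := by
    apply Finset.prod_eq_one; intro x hx; simp [hx]
  rw [h3, h4, mul_one, ← pow_add, Finset.card_sdiff_add_card_eq_card hT]

lemma crossing_bound {ι : Type} (V : Finset (ℝ × ℝ)) (E : Finset ι)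
    (L R : ι → ℝ × ℝ) (F : ι → ℝ → ℝ) (X : Finset (ι × ι))
    (hL : ∀ e ∈ E, L e ∈ V) (hR : ∀ e ∈ E, R e ∈ V)
    (hlt : ∀ e ∈ E, (L e).1 < (R e).1)
    (hFL : ∀ e ∈ E, F e (L e).1 = (L e).2) (hFR : ∀ e ∈ E, F e (R e).1 = (R e).2)
    (hc : ∀ e ∈ E, Continuous (F e))
    (hA : ∀ e ∈ E, ∀ w ∈ V, (L e).1 < w.1 → w.1 < (R e).1 → F e w.1 ≠ w.2)
    (hX : ∀ e ∈ E, ∀ g ∈ E, e ≠ g → ∀ x, (L e).1 < x → x < (R e).1 → (L g).1 < x →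
      x < (R g).1 → F e x = F g x → (e, g) ∈ X)
    (hC : ∀ e ∈ E, ∀ g ∈ E, L e = L g → R e = R g → e = g)
    (hXE : ∀ z ∈ X, z.1 ∈ E ∧ z.2 ∈ E)
    (hX4 : ∀ z ∈ X, L z.1 ≠ L z.2 ∧ L z.1 ≠ R z.2 ∧ R z.1 ≠ L z.2 ∧ R z.1 ≠ R z.2)
    (k : ℕ) :
    (k + 1) ^ 2 * E.card ≤ 3 * (k + 1) ^ 3 * V.card + X.card := by
  classical
  let Sχ : (V → Fin (k + 1)) → Finset (ℝ × ℝ) :=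
    fun χ => V.filter (fun v => ∃ h : v ∈ V, χ ⟨v, h⟩ = 0)
  have hsub : ∀ χ, ∀ T ⊆ V, (T ⊆ Sχ χ ↔ ∀ v : V, v.1 ∈ T → χ v = 0) := by
    intro χ T hT
    constructor
    · intro h v hv
      obtain ⟨_, h1⟩ := (Finset.mem_filter.mp (h hv)).2
      exact h1
    · intro h v hv
      exact Finset.mem_filter.mpr ⟨hT hv, hT hv, h ⟨v, hT hv⟩ hv⟩
  let TE : ι → Finset (ℝ × ℝ) := fun e => {L e, R e}
  let TX : ι × ι → Finset (ℝ × ℝ) := fun z => {L z.1, R z.1, L z.2, R z.2}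
  have hTEV : ∀ e ∈ E, TE e ⊆ V := by
    intro e he v hv
    simp only [TE, Finset.mem_insert, Finset.mem_singleton] at hv
    rcases hv with rfl | rfl
    · exact hL e he
    · exact hR e he
  have hTXV : ∀ z ∈ X, TX z ⊆ V := by
    intro z hz v hv
    have := hXE z hz
    simp only [TX, Finset.mem_insert, Finset.mem_singleton] at hv
    rcases hv with rfl | rfl | rfl | rfl
    · exact hL _ this.1
    · exact hR _ this.1
    · exact hL _ this.2
    · exact hR _ this.2
  have hneE : ∀ e ∈ E, L e ≠ R e := fun e he h => by
    have := hlt e he; rw [h] at this; exact lt_irrefl _ this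
  have hTEc : ∀ e ∈ E, (TE e).card = 2 := fun e he => Finset.card_pair (hneE e he)
  have hTXc : ∀ z ∈ X, (TX z).card = 4 := by
    intro z hz
    obtain ⟨a, b, c, d⟩ := hX4 z hz
    have h1 := hneE _ (hXE z hz).1
    have h2 := hneE _ (hXE z hz).2
    simp only [TX]
    rw [Finset.card_insert_of_notMem (by simp [h1, a, b]),
      Finset.card_insert_of_notMem (by simp [c, d]), Finset.card_pair h2]
  have main : ∀ χ, (E.filter (fun e => TE e ⊆ Sχ χ)).card ≤
      3 * (V.filter (fun v => {v} ⊆ Sχ χ)).card + (X.filter (fun z => TX z ⊆ Sχ χ)).card := by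
    intro χ
    have hSV : V.filter (fun v => {v} ⊆ Sχ χ) = Sχ χ := by
      ext v
      simp only [Finset.mem_filter, Finset.singleton_subset_iff, Sχ]
      tauto
    rw [hSV]
    have mE : ∀ e ∈ E.filter (fun e => TE e ⊆ Sχ χ), e ∈ E := fun e he =>
      (Finset.mem_filter.mp he).1
    have mL : ∀ e ∈ E.filter (fun e => TE e ⊆ Sχ χ), L e ∈ Sχ χ := fun e he =>
      (Finset.mem_filter.mp he).2 (by simp [TE])
    have mR : ∀ e ∈ E.filter (fun e => TE e ⊆ Sχ χ), R e ∈ Sχ χ := fun e he =>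
      (Finset.mem_filter.mp he).2 (by simp [TE])
    refine planar_del (Sχ χ) _ L R F _ mL mR (fun e he => hlt e (mE e he))
      (fun e he => hFL e (mE e he)) (fun e he => hFR e (mE e he)) (fun e he => hc e (mE e he))
      (fun e he w hw => hA e (mE e he) w (Finset.mem_filter.mp hw).1) ?_
      (fun e he g hg => hC e (mE e he) g (mE g hg))
    intro e he g hg hne x a b c d heq
    refine Finset.mem_filter.mpr ⟨hX e (mE e he) g (mE g hg) hne x a b c d heq, ?_⟩
    intro v hv
    simp only [TX, Finset.mem_insert, Finset.mem_singleton] at hv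
    rcases hv with rfl | rfl | rfl | rfl
    · exact mL e he
    · exact mR e he
    · exact mL g hg
    · exact mR g hg
  -- double counting
  have dc : ∀ {β : Type _} (A : Finset β) (T : β → Finset (ℝ × ℝ)) (j : ℕ),
      (∀ b ∈ A, T b ⊆ V) → (∀ b ∈ A, (T b).card = j) →
      (∑ χ : V → Fin (k + 1), (A.filter (fun b => T b ⊆ Sχ χ)).card) * (k + 1) ^ j
        = A.card * (k + 1) ^ V.card := by
    intro β A T j h1 h2
    simp_rw [Finset.card_filter]
    rw [Finset.sum_comm, Finset.sum_mul]
    rw [Finset.sum_congr rfl (g := fun _ => (k + 1) ^ V.card)]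
    · simp
    · intro b hb
      rw [← Finset.card_filter, ← h2 b hb, ← count_chi V (T b) (h1 b hb) k]
      congr 2
      ext χ
      simp only [Finset.mem_filter, Finset.mem_univ, true_and]
      exact hsub χ (T b) (h1 b hb)
  have dE := dc E TE 2 hTEV hTEc
  have dX := dc X TX 4 hTXV hTXc
  have dV := dc V (fun v => {v}) 1 (fun b hb => by simpa using hb) (fun b hb => by simp)
  have hsum : ∑ χ : V → Fin (k + 1), (E.filter (fun e => TE e ⊆ Sχ χ)).card ≤
      3 * ∑ χ : V → Fin (k + 1), (V.filter (fun v => {v} ⊆ Sχ χ)).card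
      + ∑ χ : V → Fin (k + 1), (X.filter (fun z => TX z ⊆ Sχ χ)).card := by
    rw [Finset.mul_sum, ← Finset.sum_add_distrib]
    exact Finset.sum_le_sum (fun χ _ => main χ)
  generalize (∑ χ : V → Fin (k + 1), (E.filter (fun e => TE e ⊆ Sχ χ)).card) = sE at *
  generalize (∑ χ : V → Fin (k + 1), (V.filter (fun v => {v} ⊆ Sχ χ)).card) = sV at *
  generalize (∑ χ : V → Fin (k + 1), (X.filter (fun z => TX z ⊆ Sχ χ)).card) = sX at *
  have hpos : 0 < (k + 1) ^ V.card := by positivity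
  apply Nat.le_of_mul_le_mul_right _ hpos
  calc (k + 1) ^ 2 * E.card * (k + 1) ^ V.card
      = (k + 1) ^ 2 * (E.card * (k + 1) ^ V.card) := by ring
    _ = sE * (k + 1) ^ 4 := by rw [← dE]; ring
    _ ≤ (3 * sV + sX) * (k + 1) ^ 4 := by gcongr
    _ = 3 * (k + 1) ^ 3 * (sV * (k + 1) ^ 1) + sX * (k + 1) ^ 4 := by ring
    _ = _ := by rw [dV, dX]; ring

lemma incidence_bound {γ : Type} (V : Finset (ℝ × ℝ)) (Q : Finset γ)
    (D : γ → Set ℝ) (F : γ → ℝ → ℝ) (hD : ∀ c, (D c).OrdConnected) (hc : ∀ c, Continuous (F c))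
    (hp : ∀ c ∈ Q, ∀ c' ∈ Q, c ≠ c' → ∀ x y, x ∈ D c → x ∈ D c' → y ∈ D c → y ∈ D c' →
      F c x = F c' x → F c y = F c' y → x = y)
    (I : Finset (γ × (ℝ × ℝ))) (hI : ∀ z ∈ I, z.1 ∈ Q ∧ z.2 ∈ V ∧ z.2.1 ∈ D z.1 ∧
      F z.1 z.2.1 = z.2.2) (k : ℕ) :
    (k + 1) ^ 2 * I.card ≤ (k + 1) ^ 2 * Q.card + 3 * (k + 1) ^ 3 * V.card + Q.card ^ 2 := by
  classical
  let on : γ → ℝ × ℝ → Prop := fun c u => u.1 ∈ D c ∧ F c u.1 = u.2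
  have on_ext : ∀ c u v, on c u → on c v → u.1 = v.1 → u = v := by
    intro c u v hu hv h
    exact Prod.ext h (by rw [← hu.2, ← hv.2, h])
  let E : Finset (γ × ((ℝ × ℝ) × (ℝ × ℝ))) := (Q ×ˢ (V ×ˢ V)).filter (fun e =>
    on e.1 e.2.1 ∧ on e.1 e.2.2 ∧ e.2.1.1 < e.2.2.1 ∧
    ∀ w ∈ V, on e.1 w → e.2.1.1 < w.1 → ¬ w.1 < e.2.2.1)
  have mE : ∀ e ∈ E, e.1 ∈ Q ∧ e.2.1 ∈ V ∧ e.2.2 ∈ V ∧ on e.1 e.2.1 ∧ on e.1 e.2.2 ∧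
      e.2.1.1 < e.2.2.1 ∧ ∀ w ∈ V, on e.1 w → e.2.1.1 < w.1 → ¬ w.1 < e.2.2.1 := by
    intro e he
    obtain ⟨h1, h2⟩ := Finset.mem_filter.mp he
    rw [Finset.mem_product, Finset.mem_product] at h1
    exact ⟨h1.1, h1.2.1, h1.2.2, h2⟩
  have inD : ∀ e ∈ E, ∀ x, e.2.1.1 ≤ x → x ≤ e.2.2.1 → x ∈ D e.1 := by
    intro e he x h1 h2
    obtain ⟨_, _, _, h4, h5, _⟩ := mE e he
    exact (hD e.1).out h4.1 h5.1 ⟨h1, h2⟩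
  -- edges on the same arc over the same point agree
  have same : ∀ e ∈ E, ∀ g ∈ E, e.1 = g.1 → ∀ x, e.2.1.1 < x → x < e.2.2.1 → g.2.1.1 < x →
      x < g.2.2.1 → e = g := by
    rintro ⟨c, u, v⟩ he ⟨c', u', v'⟩ hg hcc x a1 a2 a3 a4
    simp only at hcc a1 a2 a3 a4
    subst hcc
    obtain ⟨_, p1, p2, p3, p4, p5, p6⟩ := mE _ he
    obtain ⟨_, q1, q2, q3, q4, q5, q6⟩ := mE _ hg
    simp only at p1 p2 p3 p4 p5 p6 q1 q2 q3 q4 q5 q6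
    have hu : u = u' := by
      apply on_ext c u u' p3 q3
      rcases lt_trichotomy u.1 u'.1 with h | h | h
      · exact absurd (a3.trans a2) (p6 u' q1 q3 h)
      · exact h
      · exact absurd (a1.trans a4) (q6 u p1 p3 h)
    have hv : v = v' := by
      apply on_ext c v v' p4 q4
      rcases lt_trichotomy v.1 v'.1 with h | h | h
      · exact absurd h (q6 v p2 p4 (a3.trans a2))
      · exact h
      · exact absurd h (p6 v' q2 q4 (a1.trans a4))
    rw [hu, hv]
  let X : Finset ((γ × ((ℝ × ℝ) × (ℝ × ℝ))) × (γ × ((ℝ × ℝ) × (ℝ × ℝ)))) :=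
    (E ×ˢ E).filter (fun z => z.1 ≠ z.2 ∧ ∃ x, z.1.2.1.1 < x ∧ x < z.1.2.2.1 ∧ z.2.2.1.1 < x ∧
      x < z.2.2.2.1 ∧ F z.1.1 x = F z.2.1 x)
  have mX : ∀ z ∈ X, z.1 ∈ E ∧ z.2 ∈ E ∧ z.1.1 ≠ z.2.1 ∧ ∃ x, z.1.2.1.1 < x ∧ x < z.1.2.2.1 ∧
      z.2.2.1.1 < x ∧ x < z.2.2.2.1 ∧ F z.1.1 x = F z.2.1 x := by
    intro z hz
    obtain ⟨h1, h2, x, h3⟩ := Finset.mem_filter.mp hz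
    rw [Finset.mem_product] at h1
    refine ⟨h1.1, h1.2, ?_, x, h3⟩
    intro h
    exact h2 (same _ h1.1 _ h1.2 h x h3.1 h3.2.1 h3.2.2.1 h3.2.2.2.1)
  have hXc : X.card ≤ Q.card ^ 2 := by
    rw [sq, ← Finset.card_product]
    apply Finset.card_le_card_of_injOn (fun z => (z.1.1, z.2.1))
    · intro z hz
      obtain ⟨h1, h2, _⟩ := mX z hz
      exact Finset.mem_coe.mpr (Finset.mem_product.mpr ⟨(mE _ h1).1, (mE _ h2).1⟩)
    · intro z hz z' hz' hzz
      obtain ⟨h1, h2, h3, x, x1, x2, x3, x4, x5⟩ := mX z hz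
      obtain ⟨h1', h2', h3', y, y1, y2, y3, y4, y5⟩ := mX z' hz'
      simp only [Prod.mk.injEq] at hzz
      have hxy : x = y := by
        apply hp _ (mE _ h1).1 _ (mE _ h2).1 h3 x y (inD _ h1 x x1.le x2.le)
          (inD _ h2 x x3.le x4.le) _ _ x5
        · rw [hzz.1, hzz.2]; exact y5
        · rw [hzz.1]; exact inD _ h1' y y1.le y2.le
        · rw [hzz.2]; exact inD _ h2' y y3.le y4.le
      subst hxy
      exact Prod.ext (same _ h1 _ h1' hzz.1 x x1 x2 y1 y2) (same _ h2 _ h2' hzz.2 x x3 x4 y3 y4)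
  have hcr := crossing_bound V E (fun e => e.2.1) (fun e => e.2.2) (fun e => F e.1) X
    (fun e he => (mE e he).2.1) (fun e he => (mE e he).2.2.1)
    (fun e he => (mE e he).2.2.2.2.2.1) (fun e he => (mE e he).2.2.2.1.2)
    (fun e he => (mE e he).2.2.2.2.1.2) (fun e _ => hc e.1)
    (fun e he w hw h1 h2 h3 => (mE e he).2.2.2.2.2.2 w hw ⟨inD e he _ h1.le h2.le, h3⟩ h1 h2)
    (fun e he g hg hne x a b c d heq => Finset.mem_filter.mpr
      ⟨Finset.mem_product.mpr ⟨he, hg⟩, hne, x, a, b, c, d, heq⟩)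
    (by
      intro e he g hg h1 h2
      obtain ⟨a1, _, _, a3, a4, a5, _⟩ := mE e he
      obtain ⟨b1, _, _, b3, b4, b5, _⟩ := mE g hg
      by_cases hcc : e.1 = g.1
      · exact Prod.ext hcc (Prod.ext h1 h2)
      · exfalso
        have := hp _ a1 _ b1 hcc e.2.1.1 e.2.2.1 a3.1 (h1 ▸ b3.1) a4.1 (h2 ▸ b4.1)
          (by rw [a3.2, h1, b3.2]) (by rw [a4.2, h2, b4.2])
        exact a5.ne this)
    (fun z hz => ⟨(mX z hz).1, (mX z hz).2.1⟩)
    (by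
      intro z hz
      obtain ⟨h1, h2, h3, x, x1, x2, x3, x4, x5⟩ := mX z hz
      obtain ⟨a1, _, _, a3, a4, a5, _⟩ := mE _ h1
      obtain ⟨b1, _, _, b3, b4, b5, _⟩ := mE _ h2
      have gen : ∀ u, on z.1.1 u → on z.2.1 u → u.1 = x := by
        intro u hu hv
        exact hp _ a1 _ b1 h3 u.1 x hu.1 hv.1 (inD _ h1 x x1.le x2.le)
          (inD _ h2 x x3.le x4.le) (by rw [hu.2, hv.2]) x5
      refine ⟨fun h => ?_, fun h => ?_, fun h => ?_, fun h => ?_⟩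
      · exact x1.ne (gen _ a3 (h ▸ b3))
      · exact x1.ne (gen _ a3 (h ▸ b4))
      · exact x2.ne' (gen _ a4 (h ▸ b3))
      · exact x2.ne' (gen _ a4 (h ▸ b4)))
    k
  -- incidences versus edges
  have hIE : I.card ≤ E.card + Q.card := by
    let I1 := I.filter (fun z => ∃ w ∈ V, on z.1 w ∧ z.2.1 < w.1)
    let I2 := I.filter (fun z => ¬ ∃ w ∈ V, on z.1 w ∧ z.2.1 < w.1)
    have h12 : I1.card + I2.card = I.card := Finset.card_filter_add_card_filter_not _
    have h1 : I1.card ≤ E.card := by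
      have hs : I1 ⊆ E.image (fun e => (e.1, e.2.1)) := by
        intro z hz
        obtain ⟨hzI, w, hw, hw1, hw2⟩ := Finset.mem_filter.mp hz
        have hT : (V.filter (fun w => on z.1 w ∧ z.2.1 < w.1)).Nonempty :=
          ⟨w, Finset.mem_filter.mpr ⟨hw, hw1, hw2⟩⟩
        obtain ⟨v, hv, hvm⟩ := Finset.exists_min_image _ (fun w : ℝ × ℝ => w.1) hT
        obtain ⟨hvV, hv1, hv2⟩ := Finset.mem_filter.mp hv
        obtain ⟨i1, i2, i3, i4⟩ := hI z hzI
        refine Finset.mem_image.mpr ⟨(z.1, z.2, v), Finset.mem_filter.mpr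
          ⟨Finset.mem_product.mpr ⟨i1, Finset.mem_product.mpr ⟨i2, hvV⟩⟩, ⟨i3, i4⟩, hv1, hv2, ?_⟩, rfl⟩
        intro w' hw' ho hlt' hlt2
        exact absurd (hvm w' (Finset.mem_filter.mpr ⟨hw', ho, hlt'⟩)) (not_le.mpr hlt2)
      exact (Finset.card_le_card hs).trans Finset.card_image_le
    have h2 : I2.card ≤ Q.card := by
      apply Finset.card_le_card_of_injOn Prod.fst
      · intro z hz
        exact (hI z (Finset.mem_filter.mp hz).1).1
      · intro z hz z' hz' hzz
        obtain ⟨a, b⟩ := Finset.mem_filter.mp hz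
        obtain ⟨a', b'⟩ := Finset.mem_filter.mp hz'
        obtain ⟨i1, i2, i3, i4⟩ := hI z a
        obtain ⟨j1, j2, j3, j4⟩ := hI z' a'
        refine Prod.ext hzz (on_ext z.1 _ _ ⟨i3, i4⟩ (by rw [hzz]; exact ⟨j3, j4⟩) ?_)
        rcases lt_trichotomy z.2.1 z'.2.1 with h | h | h
        · exact absurd ⟨z'.2, j2, by rw [hzz]; exact ⟨j3, j4⟩, h⟩ b
        · exact h
        · exact absurd ⟨z.2, i2, by rw [← hzz]; exact ⟨i3, i4⟩, h⟩ b'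
    omega
  nlinarith [Nat.mul_le_mul_left ((k + 1) ^ 2) hIE]

lemma arc_unique (C b₁ b₂ a₁ a₂ y₁ y₂ : ℝ) (hb₁ : 0 < b₁) (hb : b₁ < b₂) (hy₁ : 0 < y₁)
    (hy : y₁ < y₂)
    (h11 : b₁ ^ 2 + y₁ ^ 2 ≤ 2 * C * b₁ * y₁) (h12 : b₁ ^ 2 + y₂ ^ 2 ≤ 2 * C * b₁ * y₂)
    (h21 : b₂ ^ 2 + y₁ ^ 2 ≤ 2 * C * b₂ * y₁) (h22 : b₂ ^ 2 + y₂ ^ 2 ≤ 2 * C * b₂ * y₂)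
    (e1 : a₁ + √(2 * C * b₁ * y₁ - b₁ ^ 2 - y₁ ^ 2) = a₂ + √(2 * C * b₂ * y₁ - b₂ ^ 2 - y₁ ^ 2))
    (e2 : a₁ + √(2 * C * b₁ * y₂ - b₁ ^ 2 - y₂ ^ 2) = a₂ + √(2 * C * b₂ * y₂ - b₂ ^ 2 - y₂ ^ 2)) :
    False := by
  have s11 := Real.sq_sqrt (show 0 ≤ 2 * C * b₁ * y₁ - b₁ ^ 2 - y₁ ^ 2 by linarith)
  have s12 := Real.sq_sqrt (show 0 ≤ 2 * C * b₁ * y₂ - b₁ ^ 2 - y₂ ^ 2 by linarith)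
  have s21 := Real.sq_sqrt (show 0 ≤ 2 * C * b₂ * y₁ - b₂ ^ 2 - y₁ ^ 2 by linarith)
  have s22 := Real.sq_sqrt (show 0 ≤ 2 * C * b₂ * y₂ - b₂ ^ 2 - y₂ ^ 2 by linarith)
  have p11 := Real.sqrt_nonneg (2 * C * b₁ * y₁ - b₁ ^ 2 - y₁ ^ 2)
  have p12 := Real.sqrt_nonneg (2 * C * b₁ * y₂ - b₁ ^ 2 - y₂ ^ 2)
  have p21 := Real.sqrt_nonneg (2 * C * b₂ * y₁ - b₂ ^ 2 - y₁ ^ 2)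
  have p22 := Real.sqrt_nonneg (2 * C * b₂ * y₂ - b₂ ^ 2 - y₂ ^ 2)
  generalize √(2 * C * b₁ * y₁ - b₁ ^ 2 - y₁ ^ 2) = u1 at *
  generalize √(2 * C * b₁ * y₂ - b₁ ^ 2 - y₂ ^ 2) = v1 at *
  generalize √(2 * C * b₂ * y₁ - b₂ ^ 2 - y₁ ^ 2) = u2 at *
  generalize √(2 * C * b₂ * y₂ - b₂ ^ 2 - y₂ ^ 2) = v2 at *
  have hb2 : 0 < b₂ := hb₁.trans hb
  have hy2 : 0 < y₂ := hy₁.trans hy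
  have hC : 0 < C := by
    by_contra h
    have : 2 * C * b₁ * y₁ ≤ 0 := by
      have : 0 < b₁ * y₁ := by positivity
      nlinarith
    nlinarith [sq_pos_of_pos hb₁, sq_nonneg y₁]
  have hYB : 0 < (y₂ - y₁) * (b₂ - b₁) := mul_pos (by linarith) (by linarith)
  have hsum : u1 + v2 = v1 + u2 := by linarith
  have hsq : u1 ^ 2 + v2 ^ 2 - v1 ^ 2 - u2 ^ 2 = 2 * C * ((y₂ - y₁) * (b₂ - b₁)) := by
    rw [s11, s12, s21, s22]; ring
  have hlt : u1 * v2 < v1 * u2 := by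
    have h1 : (u1 + v2) ^ 2 = (v1 + u2) ^ 2 := by rw [hsum]
    have h2 : 0 < 2 * C * ((y₂ - y₁) * (b₂ - b₁)) := by positivity
    nlinarith
  have hlt2 : (u1 * v2) ^ 2 < (v1 * u2) ^ 2 := by
    apply pow_lt_pow_left₀ hlt (by positivity) (by norm_num)
  rw [mul_pow, mul_pow, s11, s12, s21, s22] at hlt2
  have hfac : (2 * C * b₁ * y₁ - b₁ ^ 2 - y₁ ^ 2) * (2 * C * b₂ * y₂ - b₂ ^ 2 - y₂ ^ 2)
      - (2 * C * b₁ * y₂ - b₁ ^ 2 - y₂ ^ 2) * (2 * C * b₂ * y₁ - b₂ ^ 2 - y₁ ^ 2)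
      = ((y₂ - y₁) * (b₂ - b₁)) * (2 * C * (b₁ * b₂ + y₁ * y₂) - (b₁ + b₂) * (y₁ + y₂)) := by
    ring
  have hneg : 2 * C * (b₁ * b₂ + y₁ * y₂) - (b₁ + b₂) * (y₁ + y₂) < 0 := by
    by_contra h
    have := mul_nonneg hYB.le (not_lt.mp h)
    linarith
  have hw : 0 < b₁ * b₂ + y₁ * y₂ := by positivity
  have m1 : y₁ ^ 2 ≤ y₁ * y₂ := by rw [sq]; exact mul_le_mul_of_nonneg_left hy.le hy₁.le
  have m2 : y₁ * y₂ ≤ y₂ ^ 2 := by rw [sq]; exact mul_le_mul_of_nonneg_right hy.le hy2.le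
  have m3 : b₁ ^ 2 ≤ b₁ * b₂ := by rw [sq]; exact mul_le_mul_of_nonneg_left hb.le hb₁.le
  have m4 : b₁ * b₂ ≤ b₂ ^ 2 := by rw [sq]; exact mul_le_mul_of_nonneg_right hb.le hb2.le
  rcases le_total (y₁ * y₂) (b₁ * b₂) with h | h
  · have t1 : (b₂ ^ 2 + y₁ ^ 2) * (b₁ * b₂ + y₁ * y₂) ≤ 2 * C * b₂ * y₁ * (b₁ * b₂ + y₁ * y₂) :=
      mul_le_mul_of_nonneg_right h21 hw.le
    have t2 : (b₂ ^ 2 + y₁ ^ 2) * (b₁ * b₂ + y₁ * y₂) - b₂ * y₁ * ((b₁ + b₂) * (y₁ + y₂))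
      = (b₁ * b₂ - y₁ ^ 2) * (b₂ ^ 2 - y₁ * y₂) := by ring
    have t3 : 0 ≤ (b₁ * b₂ - y₁ ^ 2) * (b₂ ^ 2 - y₁ * y₂) :=
      mul_nonneg (by linarith) (by linarith)
    have t4 : 0 < b₂ * y₁ := by positivity
    have t5 := mul_neg_of_pos_of_neg t4 hneg
    have t6 : b₂ * y₁ * (2 * C * (b₁ * b₂ + y₁ * y₂) - (b₁ + b₂) * (y₁ + y₂))
      = 2 * C * b₂ * y₁ * (b₁ * b₂ + y₁ * y₂) - b₂ * y₁ * ((b₁ + b₂) * (y₁ + y₂)) := by ring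
    linarith
  · have t1 : (b₁ ^ 2 + y₂ ^ 2) * (b₁ * b₂ + y₁ * y₂) ≤ 2 * C * b₁ * y₂ * (b₁ * b₂ + y₁ * y₂) :=
      mul_le_mul_of_nonneg_right h12 hw.le
    have t2 : (b₁ ^ 2 + y₂ ^ 2) * (b₁ * b₂ + y₁ * y₂) - b₁ * y₂ * ((b₁ + b₂) * (y₁ + y₂))
      = (y₂ ^ 2 - b₁ * b₂) * (y₁ * y₂ - b₁ ^ 2) := by ring
    have t3 : 0 ≤ (y₂ ^ 2 - b₁ * b₂) * (y₁ * y₂ - b₁ ^ 2) :=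
      mul_nonneg (by linarith) (by linarith)
    have t4 : 0 < b₁ * y₂ := by positivity
    have t5 := mul_neg_of_pos_of_neg t4 hneg
    have t6 : b₁ * y₂ * (2 * C * (b₁ * b₂ + y₁ * y₂) - (b₁ + b₂) * (y₁ + y₂))
      = 2 * C * b₁ * y₂ * (b₁ * b₂ + y₁ * y₂) - b₁ * y₂ * ((b₁ + b₂) * (y₁ + y₂)) := by ring
    linarith

lemma cosh_eq (p c : ℍ) (t : ℝ) (h : dist p c = t) :
    (p.re - c.re) ^ 2 = 2 * Real.cosh t * c.im * p.im - c.im ^ 2 - p.im ^ 2 := by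
  have h1 := UpperHalfPlane.cosh_dist p c
  rw [h] at h1
  have hp := p.im_pos
  have hc := c.im_pos
  have h2 : dist (p : ℂ) (c : ℂ) ^ 2 = (p.re - c.re) ^ 2 + (p.im - c.im) ^ 2 := by
    rw [Complex.dist_eq_re_im, Real.sq_sqrt (by positivity)]
    rfl
  rw [h2] at h1
  rw [h1]
  field_simp
  ring

lemma right_bound (Q : Finset ℍ) (t : ℝ) (k : ℕ) :
    (k + 1) ^ 2 * ((Q ×ˢ Q).filter (fun z => dist z.1 z.2 = t ∧ z.2.re ≤ z.1.re)).card
      ≤ (k + 1) ^ 2 * Q.card + 3 * (k + 1) ^ 3 * Q.card + Q.card ^ 2 := by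
  classical
  let Φ : ℍ → ℝ × ℝ := fun p => (p.im, p.re)
  have hΦ : Function.Injective Φ := by
    intro p q h
    simp only [Φ, Prod.mk.injEq] at h
    exact UpperHalfPlane.ext_re_im h.2 h.1
  let D : ℍ → Set ℝ := fun c => {y | c.im ^ 2 + y ^ 2 ≤ 2 * Real.cosh t * c.im * y}
  let F : ℍ → ℝ → ℝ := fun c y => c.re + √(2 * Real.cosh t * c.im * y - c.im ^ 2 - y ^ 2)
  have hpos : ∀ c y, y ∈ D c → 0 < y := by
    intro c y hy
    simp only [D] at hy
    have hy' : c.im ^ 2 + y ^ 2 ≤ 2 * Real.cosh t * c.im * y := hy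
    have hc := c.im_pos
    have hch := Real.cosh_pos t
    by_contra h
    have : 2 * Real.cosh t * c.im * y ≤ 0 :=
      mul_nonpos_of_nonneg_of_nonpos (by positivity) (not_lt.mp h)
    nlinarith [sq_pos_of_pos hc, sq_nonneg y]
  have hD : ∀ c, (D c).OrdConnected := by
    intro c
    refine ⟨fun x hx y hy z hz => ?_⟩
    have hx' : c.im ^ 2 + x ^ 2 ≤ 2 * Real.cosh t * c.im * x := hx
    have hy' : c.im ^ 2 + y ^ 2 ≤ 2 * Real.cosh t * c.im * y := hy
    change c.im ^ 2 + z ^ 2 ≤ 2 * Real.cosh t * c.im * z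
    obtain ⟨h1, h2⟩ := hz
    generalize 2 * Real.cosh t * c.im = m at *
    by_contra hcon
    rw [not_le] at hcon
    have a1 : (z - x) * (m - x - z) < 0 := by nlinarith
    have a2 : 0 < (y - z) * (m - y - z) := by nlinarith
    have b1 : 0 ≤ z - x := by linarith
    have b2 : 0 ≤ y - z := by linarith
    have c1 : m - x - z < 0 := by
      by_contra h; exact absurd (mul_nonneg b1 (not_lt.mp h)) (not_le.mpr a1)
    have c2 : 0 < m - y - z := by
      by_contra h; exact absurd (mul_nonpos_of_nonneg_of_nonpos b2 (not_lt.mp h)) (not_le.mpr a2)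
    linarith
  have hc : ∀ c, Continuous (F c) := by
    intro c; simp only [F]; fun_prop
  have half : ∀ c c' : ℍ, c.im < c'.im → ∀ x y, x ∈ D c → x ∈ D c' → y ∈ D c → y ∈ D c' →
      F c x = F c' x → F c y = F c' y → x = y := by
    intro c c' hlt x y h1 h2 h3 h4 e1 e2
    rcases lt_trichotomy x y with h | h | h
    · exact (arc_unique (Real.cosh t) c.im c'.im c.re c'.re x y c.im_pos hlt (hpos c x h1) h
        h1 h3 h2 h4 e1 e2).elim
    · exact h
    · exact (arc_unique (Real.cosh t) c.im c'.im c.re c'.re y x c.im_pos hlt (hpos c y h3) h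
        h3 h1 h4 h2 e2 e1).elim
  have hp : ∀ c ∈ Q, ∀ c' ∈ Q, c ≠ c' → ∀ x y, x ∈ D c → x ∈ D c' → y ∈ D c → y ∈ D c' →
      F c x = F c' x → F c y = F c' y → x = y := by
    intro c _ c' _ hne x y h1 h2 h3 h4 e1 e2
    rcases lt_trichotomy c.im c'.im with h | h | h
    · exact half c c' h x y h1 h2 h3 h4 e1 e2
    · exfalso
      apply hne
      refine UpperHalfPlane.ext_re_im ?_ h
      simp only [F] at e1
      rw [h] at e1
      linarith
    · exact half c' c h x y h2 h1 h4 h3 e1.symm e2.symm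
  let J := (Q ×ˢ Q).filter (fun z => dist z.1 z.2 = t ∧ z.2.re ≤ z.1.re)
  let I := J.image (fun z => (z.2, Φ z.1))
  have hIc : I.card = J.card := by
    apply Finset.card_image_of_injective
    rintro ⟨p, q⟩ ⟨p', q'⟩ h
    simp only [Prod.mk.injEq] at h
    rw [h.1, hΦ h.2]
  have hI : ∀ z ∈ I, z.1 ∈ Q ∧ z.2 ∈ Q.image Φ ∧ z.2.1 ∈ D z.1 ∧ F z.1 z.2.1 = z.2.2 := by
    intro z hz
    obtain ⟨⟨p, c⟩, hpc, rfl⟩ := Finset.mem_image.mp hz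
    obtain ⟨h1, h2, h3⟩ := Finset.mem_filter.mp hpc
    rw [Finset.mem_product] at h1
    have h4 := cosh_eq p c t h2
    refine ⟨h1.2, Finset.mem_image_of_mem _ h1.1, ?_, ?_⟩
    · change c.im ^ 2 + p.im ^ 2 ≤ 2 * Real.cosh t * c.im * p.im
      nlinarith [sq_nonneg (p.re - c.re)]
    · change c.re + √(2 * Real.cosh t * c.im * p.im - c.im ^ 2 - p.im ^ 2) = p.re
      rw [← h4, Real.sqrt_sq (by simp only at h3; linarith)]
      ring
  have := incidence_bound (Q.image Φ) Q D F hD hc hp I hI k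
  rw [hIc, Finset.card_image_of_injective _ hΦ] at this
  exact this

lemma unit_bound (Q : Finset ℍ) (t : ℝ) :
    (((Q ×ˢ Q).filter (fun z => dist z.1 z.2 = t)).card : ℝ) ≤ 16 * (Q.card : ℝ) ^ ((4 : ℝ) / 3) := by
  classical
  let J := (Q ×ˢ Q).filter (fun z => dist z.1 z.2 = t ∧ z.2.re ≤ z.1.re)
  have h1 : ((Q ×ˢ Q).filter (fun z => dist z.1 z.2 = t)).card ≤ J.card + J.card := by
    have : (Q ×ˢ Q).filter (fun z => dist z.1 z.2 = t) ⊆ J ∪ J.image Prod.swap := by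
      rintro ⟨p, q⟩ h
      obtain ⟨h1, h2⟩ := Finset.mem_filter.mp h
      have h1' := Finset.mem_product.mp h1
      rw [Finset.mem_union]
      rcases le_total q.re p.re with h | h
      · left; exact Finset.mem_filter.mpr ⟨h1, h2, h⟩
      · right
        refine Finset.mem_image.mpr ⟨(q, p), Finset.mem_filter.mpr
          ⟨Finset.mem_product.mpr ⟨h1'.2, h1'.1⟩, by rw [dist_comm]; exact h2, h⟩, rfl⟩
    refine (Finset.card_le_card this).trans ((Finset.card_union_le _ _).trans ?_)
    exact Nat.add_le_add_left Finset.card_image_le _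
  rcases Nat.eq_zero_or_pos Q.card with h0 | h0
  · have : Q = ∅ := Finset.card_eq_zero.mp h0
    subst this
    simp
  have hn : (1 : ℝ) ≤ (Q.card : ℝ) := by exact_mod_cast h0
  set n : ℝ := (Q.card : ℝ) with hnd
  set m : ℝ := n ^ ((1 : ℝ) / 3) with hm
  have hm1 : 1 ≤ m := Real.one_le_rpow hn (by norm_num)
  have hm3 : m ^ 3 = n := by
    rw [hm, ← Real.rpow_natCast, ← Real.rpow_mul (by linarith)]; norm_num
  have hm4 : n ^ ((4 : ℝ) / 3) = m ^ 4 := by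
    rw [hm, ← Real.rpow_natCast, ← Real.rpow_mul (by linarith)]; norm_num
  have hr := right_bound Q t ⌊m⌋₊
  have hk1 : m ≤ (⌊m⌋₊ : ℝ) + 1 := (Nat.lt_floor_add_one m).le
  have hk2 : (⌊m⌋₊ : ℝ) + 1 ≤ 2 * m := by
    have := Nat.floor_le (show 0 ≤ m by linarith)
    linarith
  have hr' : ((⌊m⌋₊ : ℝ) + 1) ^ 2 * (J.card : ℝ) ≤
      ((⌊m⌋₊ : ℝ) + 1) ^ 2 * n + 3 * ((⌊m⌋₊ : ℝ) + 1) ^ 3 * n + n ^ 2 := by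
    rw [hnd]
    exact_mod_cast hr
  generalize (⌊m⌋₊ : ℝ) + 1 = k at *
  have hkpos : 0 < k := by linarith
  have hJ : (J.card : ℝ) ≤ 8 * m ^ 4 := by
    have hk2pos : 0 < k ^ 2 := by positivity
    refine le_of_mul_le_mul_left (hr'.trans ?_) hk2pos
    have q1 : n ≤ m ^ 4 := by
      rw [← hm3]; exact pow_le_pow_right₀ hm1 (by norm_num)
    have q2 : k * n ≤ 2 * m ^ 4 := by
      rw [← hm3]
      calc k * m ^ 3 ≤ 2 * m * m ^ 3 := by gcongr
        _ = 2 * m ^ 4 := by ring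
    have q3 : n ^ 2 ≤ k ^ 2 * m ^ 4 := by
      rw [← hm3]
      calc (m ^ 3) ^ 2 = m ^ 2 * m ^ 4 := by ring
        _ ≤ k ^ 2 * m ^ 4 := by gcongr
    have r1 := mul_le_mul_of_nonneg_left q1 hk2pos.le
    have r2 := mul_le_mul_of_nonneg_left q2 hk2pos.le
    nlinarith
  rw [hm4]
  have h1' : (((Q ×ˢ Q).filter (fun z => dist z.1 z.2 = t)).card : ℝ) ≤ J.card + J.card := by
    exact_mod_cast h1
  linarith

lemma layer_bound (P : Finset ℍ) (Γ₀ : Finset SL(2, ℝ)) (hne : Γ₀.Nonempty) (t : ℝ)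
    (A : Finset (ℍ × ℍ)) (hA : ∀ z ∈ A, z.1 ∈ P ∧ z.2 ∈ P ∧ ∃ γ ∈ Γ₀, dist z.1 (γ • z.2) = t) :
    (A.card : ℝ) ≤ (16 * (2 : ℝ) ^ ((4 : ℝ) / 3) * ∑' s : ℕ, ((s : ℝ) ^ ((4 : ℝ) / 3))⁻¹) *
      ((Γ₀.card : ℝ) * (P.card : ℝ)) ^ ((4 : ℝ) / 3) := by
  classical
  let X : Finset ℍ := (Γ₀ ×ˢ P).image (fun z => z.1 • z.2)
  let W : ℍ → Finset ℍ := fun x => P.filter (fun q => ∃ γ ∈ Γ₀, γ • q = x)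
  have hWK : ∀ x, (W x).card ≤ Γ₀.card := by
    intro x
    have : W x ⊆ Γ₀.image (fun γ => γ⁻¹ • x) := by
      intro q hq
      obtain ⟨_, γ, hγ, h⟩ := Finset.mem_filter.mp hq
      exact Finset.mem_image.mpr ⟨γ, hγ, by rw [← h, inv_smul_smul]⟩
    exact (Finset.card_le_card this).trans Finset.card_image_le
  have hWsum : ∑ x ∈ X, (W x).card ≤ Γ₀.card * P.card := by
    rw [← Finset.card_product]
    rw [Finset.card_eq_sum_card_image (fun z : SL(2, ℝ) × ℍ => z.1 • z.2) (Γ₀ ×ˢ P)]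
    apply Finset.sum_le_sum
    intro x _
    have : W x ⊆ ((Γ₀ ×ˢ P).filter (fun z => z.1 • z.2 = x)).image Prod.snd := by
      intro q hq
      obtain ⟨hq, γ, hγ, h⟩ := Finset.mem_filter.mp hq
      exact Finset.mem_image.mpr ⟨(γ, q), Finset.mem_filter.mpr
        ⟨Finset.mem_product.mpr ⟨hγ, hq⟩, h⟩, rfl⟩
    exact (Finset.card_le_card this).trans Finset.card_image_le
  let Xs : ℕ → Finset ℍ := fun s => X.filter (fun x => s ≤ (W x).card)
  have hXs : ∀ s, s * (Xs s).card ≤ Γ₀.card * P.card := by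
    intro s
    calc s * (Xs s).card = ∑ x ∈ Xs s, s := by simp [mul_comm]
      _ ≤ ∑ x ∈ Xs s, (W x).card := Finset.sum_le_sum (fun x hx => (Finset.mem_filter.mp hx).2)
      _ ≤ ∑ x ∈ X, (W x).card := Finset.sum_le_sum_of_subset (Finset.filter_subset _ _)
      _ ≤ _ := hWsum
  let B : ℕ → Finset (ℍ × ℍ) := fun s =>
    ((P ∪ Xs s) ×ˢ (P ∪ Xs s)).filter (fun z => dist z.1 z.2 = t)
  let Y := (P ×ˢ X).filter (fun z => dist z.1 z.2 = t)
  have hA1 : A.card ≤ ∑ z ∈ Y, (W z.2).card := by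
    have : A ⊆ Y.biUnion (fun z => (W z.2).image (fun q => (z.1, q))) := by
      rintro ⟨p, q⟩ hz
      obtain ⟨h1, h2, γ, hγ, h3⟩ := hA _ hz
      refine Finset.mem_biUnion.mpr ⟨(p, γ • q), Finset.mem_filter.mpr
        ⟨Finset.mem_product.mpr ⟨h1, Finset.mem_image.mpr ⟨(γ, q),
          Finset.mem_product.mpr ⟨hγ, h2⟩, rfl⟩⟩, h3⟩, ?_⟩
      exact Finset.mem_image.mpr ⟨q, Finset.mem_filter.mpr ⟨h2, γ, hγ, rfl⟩, rfl⟩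
    refine (Finset.card_le_card this).trans (Finset.card_biUnion_le.trans ?_)
    exact Finset.sum_le_sum (fun z _ => Finset.card_image_le)
  have hA2 : ∑ z ∈ Y, (W z.2).card ≤ ∑ s ∈ Finset.Icc 1 Γ₀.card, (B s).card := by
    have e1 : ∀ z ∈ Y, (W z.2).card = ∑ s ∈ Finset.Icc 1 Γ₀.card,
        if s ≤ (W z.2).card then 1 else 0 := by
      intro z _
      rw [← Finset.card_filter]
      have : (Finset.Icc 1 Γ₀.card).filter (fun s => s ≤ (W z.2).card)
          = Finset.Icc 1 (W z.2).card := by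
        ext s
        have := hWK z.2
        simp only [Finset.mem_filter, Finset.mem_Icc]
        omega
      rw [this]; simp
    rw [Finset.sum_congr rfl e1, Finset.sum_comm]
    apply Finset.sum_le_sum
    intro s _
    rw [← Finset.card_filter]
    apply Finset.card_le_card
    rintro ⟨p, x⟩ hz
    obtain ⟨h1, h2⟩ := Finset.mem_filter.mp hz
    obtain ⟨h3, h4⟩ := Finset.mem_filter.mp h1
    rw [Finset.mem_product] at h3
    exact Finset.mem_filter.mpr ⟨Finset.mem_product.mpr ⟨Finset.mem_union_left _ h3.1,
      Finset.mem_union_right _ (Finset.mem_filter.mpr ⟨h3.2, h2⟩)⟩, h4⟩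
  have hB : ∀ s ∈ Finset.Icc 1 Γ₀.card, ((B s).card : ℝ) ≤
      16 * (2 : ℝ) ^ ((4 : ℝ) / 3) * ((Γ₀.card : ℝ) * (P.card : ℝ)) ^ ((4 : ℝ) / 3) *
        ((s : ℝ) ^ ((4 : ℝ) / 3))⁻¹ := by
    intro s hs
    obtain ⟨hs1, hs2⟩ := Finset.mem_Icc.mp hs
    have hspos : (0 : ℝ) < s := by exact_mod_cast hs1
    have hb := unit_bound (P ∪ Xs s) t
    have hcard : ((P ∪ Xs s).card : ℝ) ≤ 2 * ((Γ₀.card : ℝ) * P.card) / s := by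
      rw [le_div_iff₀ hspos]
      have : (P ∪ Xs s).card * s ≤ 2 * (Γ₀.card * P.card) := by
        have h1 := Finset.card_union_le P (Xs s)
        have h2 := hXs s
        have h3 : s * P.card ≤ Γ₀.card * P.card := Nat.mul_le_mul_right _ hs2
        nlinarith
      exact_mod_cast this
    have hle : ((P ∪ Xs s).card : ℝ) ^ ((4 : ℝ) / 3) ≤
        (2 * ((Γ₀.card : ℝ) * P.card) / s) ^ ((4 : ℝ) / 3) :=
      Real.rpow_le_rpow (by positivity) hcard (by norm_num)
    rw [Real.div_rpow (by positivity) hspos.le, Real.mul_rpow (by norm_num) (by positivity)] at hle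
    calc ((B s).card : ℝ) ≤ 16 * ((P ∪ Xs s).card : ℝ) ^ ((4 : ℝ) / 3) := hb
      _ ≤ 16 * ((2 : ℝ) ^ ((4 : ℝ) / 3) * ((Γ₀.card : ℝ) * P.card) ^ ((4 : ℝ) / 3)
          / (s : ℝ) ^ ((4 : ℝ) / 3)) := by gcongr
      _ = _ := by rw [div_eq_mul_inv]; ring
  have hsummable : Summable (fun s : ℕ => ((s : ℝ) ^ ((4 : ℝ) / 3))⁻¹) :=
    Real.summable_nat_rpow_inv.mpr (by norm_num)
  have hts : ∑ s ∈ Finset.Icc 1 Γ₀.card, ((s : ℝ) ^ ((4 : ℝ) / 3))⁻¹ ≤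
      ∑' s : ℕ, ((s : ℝ) ^ ((4 : ℝ) / 3))⁻¹ :=
    hsummable.sum_le_tsum _ (fun s _ => by positivity)
  calc (A.card : ℝ) ≤ ((∑ s ∈ Finset.Icc 1 Γ₀.card, (B s).card : ℕ) : ℝ) := by
        exact_mod_cast hA1.trans hA2
    _ = ∑ s ∈ Finset.Icc 1 Γ₀.card, ((B s).card : ℝ) := by push_cast; rfl
    _ ≤ ∑ s ∈ Finset.Icc 1 Γ₀.card, 16 * (2 : ℝ) ^ ((4 : ℝ) / 3) *
        ((Γ₀.card : ℝ) * (P.card : ℝ)) ^ ((4 : ℝ) / 3) * ((s : ℝ) ^ ((4 : ℝ) / 3))⁻¹ :=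
      Finset.sum_le_sum hB
    _ = 16 * (2 : ℝ) ^ ((4 : ℝ) / 3) * ((Γ₀.card : ℝ) * (P.card : ℝ)) ^ ((4 : ℝ) / 3) *
        ∑ s ∈ Finset.Icc 1 Γ₀.card, ((s : ℝ) ^ ((4 : ℝ) / 3))⁻¹ := by rw [Finset.mul_sum]
    _ ≤ 16 * (2 : ℝ) ^ ((4 : ℝ) / 3) * ((Γ₀.card : ℝ) * (P.card : ℝ)) ^ ((4 : ℝ) / 3) *
        ∑' s : ℕ, ((s : ℝ) ^ ((4 : ℝ) / 3))⁻¹ := by gcongr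
    _ = _ := by ring

/-- There is an absolute constant `C > 0` such that for any subgroup `Γ ≤ SL(2,ℝ)`,
any finite set `P` of `N` points of `ℍ²` with a geodesic cover `Γ₀ ⊆ Γ` of cardinality
`K`, and any `t > 0`, the number of ordered pairs of points of `P` at quotient distance
exactly `t` is at most `C · (K·N)^(4/3)`. -/
theorem unit_distances_hyperbolic_surface :
    ∃ C : ℝ, 0 < C ∧
      ∀ (Γ : Subgroup SL(2, ℝ)) (P : Finset ℍ) (Γ₀ : Finset SL(2, ℝ))
        (hne : Γ₀.Nonempty),
        (↑Γ₀ : Set SL(2, ℝ)) ⊆ (↑Γ : Set SL(2, ℝ)) →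
        (∀ p ∈ P, ∀ q ∈ P, quotDist Γ p q = Γ₀.inf' hne fun γ => dist p (γ • q)) →
        ∀ t : ℝ, 0 < t →
          ({x : ℍ × ℍ | x.1 ∈ P ∧ x.2 ∈ P ∧ quotDist Γ x.1 x.2 = t}.ncard : ℝ) ≤
            C * ((Γ₀.card : ℝ) * (P.card : ℝ)) ^ ((4 : ℝ) / 3) := by
  classical
  have hsummable : Summable (fun s : ℕ => ((s : ℝ) ^ ((4 : ℝ) / 3))⁻¹) :=
    Real.summable_nat_rpow_inv.mpr (by norm_num)
  have hpos : 0 < ∑' s : ℕ, ((s : ℝ) ^ ((4 : ℝ) / 3))⁻¹ :=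
    hsummable.tsum_pos (fun s => by positivity) 1 (by norm_num)
  refine ⟨16 * (2 : ℝ) ^ ((4 : ℝ) / 3) * ∑' s : ℕ, ((s : ℝ) ^ ((4 : ℝ) / 3))⁻¹,
    by positivity, ?_⟩
  intro Γ P Γ₀ hne _ hcov t _
  have hset : {x : ℍ × ℍ | x.1 ∈ P ∧ x.2 ∈ P ∧ quotDist Γ x.1 x.2 = t} =
      (((P ×ˢ P).filter (fun x => quotDist Γ x.1 x.2 = t) : Finset (ℍ × ℍ)) : Set (ℍ × ℍ)) := by
    ext x
    simp [and_assoc]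
  rw [hset, Set.ncard_coe_finset]
  apply layer_bound P Γ₀ hne t
  intro z hz
  obtain ⟨h1, h2⟩ := Finset.mem_filter.mp hz
  rw [Finset.mem_product] at h1
  refine ⟨h1.1, h1.2, ?_⟩
  rw [hcov z.1 h1.1 z.2 h1.2] at h2
  obtain ⟨γ, hγ, h⟩ := Finset.exists_mem_eq_inf' hne (fun γ => dist z.1 (γ • z.2))
  exact ⟨γ, hγ, by rw [← h, h2]⟩

end
end

section
/- Let z₁, z₂ ∈ ℍ² satisfy 0 < Re z₁ ≤ 1 and 0 < Re z₂ ≤ 1 (i.e. both lie in the strip fundamental domain of the group of integer translations). Then inf_{n ∈ ℤ} d(z₁, z₂ + n) = min_{n ∈ {−1, 0, 1}} d(z₁, z₂ + n). In particular, the geodesic-covering number of the translation group {(1 n; 0 1) : n ∈ ℤ} ≤ SL(2,ℝ) is at most 3. -/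
open scoped UpperHalfPlane

noncomputable section

theorem dist_vadd_le_aux (z w : ℍ) (a b : ℝ)
    (h : (z.re - (a + w.re)) ^ 2 ≤ (z.re - (b + w.re)) ^ 2) :
    dist z (a +ᵥ w) ≤ dist z (b +ᵥ w) := by
  have key : Real.cosh (dist z (a +ᵥ w)) ≤ Real.cosh (dist z (b +ᵥ w)) := by
    rw [UpperHalfPlane.cosh_dist', UpperHalfPlane.cosh_dist']
    simp only [UpperHalfPlane.vadd_re, UpperHalfPlane.vadd_im]
    have := z.im_pos
    have := w.im_pos
    gcongr
  rwa [Real.cosh_le_cosh, abs_of_nonneg dist_nonneg, abs_of_nonneg dist_nonneg] at key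

/-- For `z₁, z₂` in the strip fundamental domain `0 < Re z ≤ 1` of the group of integer
translations, `inf_{n ∈ ℤ} d(z₁, z₂ + n) = min_{n ∈ {−1,0,1}} d(z₁, z₂ + n)`; in
particular, the geodesic-covering number of the translation group is at most `3`. -/
theorem translation_geodesic_cover_three (z₁ z₂ : ℍ)
    (h₁ : 0 < z₁.re) (h₁' : z₁.re ≤ 1) (h₂ : 0 < z₂.re) (h₂' : z₂.re ≤ 1) :
    (⨅ n : ℤ, dist z₁ ((n : ℝ) +ᵥ z₂)) =
      min (dist z₁ ((-1 : ℝ) +ᵥ z₂))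
        (min (dist z₁ ((0 : ℝ) +ᵥ z₂)) (dist z₁ ((1 : ℝ) +ᵥ z₂))) := by
  have bdd : BddBelow (Set.range fun n : ℤ => dist z₁ ((n : ℝ) +ᵥ z₂)) :=
    ⟨0, by rintro _ ⟨n, rfl⟩; exact dist_nonneg⟩
  apply le_antisymm
  · refine le_min ?_ (le_min ?_ ?_)
    · simpa using ciInf_le bdd (-1)
    · simpa using ciInf_le bdd 0
    · simpa using ciInf_le bdd 1
  · refine le_ciInf fun n => ?_
    have hn : n ≤ -1 ∨ n = 0 ∨ 1 ≤ n := by omega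
    rcases hn with hn | rfl | hn
    · refine (min_le_left _ _).trans (dist_vadd_le_aux _ _ _ _ ?_)
      have hn' : (n : ℝ) ≤ -1 := by exact_mod_cast hn
      rcases eq_or_lt_of_le hn with rfl | hlt
      · simp
      have h2 : (n : ℝ) ≤ -2 := by exact_mod_cast (by omega : n ≤ -2)
      apply sq_le_sq'
      · linarith
      · linarith
    · refine (min_le_right _ _).trans ((min_le_left _ _).trans ?_)
      simp
    · refine (min_le_right _ _).trans ((min_le_right _ _).trans (dist_vadd_le_aux _ _ _ _ ?_))
      rcases eq_or_lt_of_le hn with rfl | hlt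
      · simp
      have h2 : (2 : ℝ) ≤ n := by exact_mod_cast (by omega : 2 ≤ n)
      nlinarith [mul_nonneg (by linarith : (0 : ℝ) ≤ n - 1)
        (by linarith : (0 : ℝ) ≤ n + 1 - 2 * (z₁.re - z₂.re))]

end
end
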